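/- arXiv:2012.00311 — 5 statements merged into one kernel-verified Lean document; each statement's English description precedes it below -/
import Mathlib

section
/- Let G be a tree on n ≥ 4 vertices in which no vertex has degree 2 and which is not a star. Then the maximum integer k such that G admits a feasible agency with k agents and some time horizon T equals n − 3. -/
open SimpleGraph

/-- A walk with parking of time horizon `T` that visits every vertex and returns
to its starting vertex: a (traveling salesman) tour. -/
def AgencyTour {V : Type*} (G : SimpleGraph V) (T : ℕ) (a : ℕ → V) : Prop :=
  (∀ t < T, a t = a (t + 1) ∨ G.Adj (a t) (a (t + 1))) ∧
  (∀ v : V, ∃ t ≤ T, a t = v) ∧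
  a 0 = a T

/-- A feasible agency with `k` agents and time horizon `T`: each agent performs a
tour (with parking), and no two distinct agents crash in a node or in an edge. -/
def FeasibleAgency {V : Type*} (G : SimpleGraph V) (k T : ℕ) (a : Fin k → ℕ → V) : Prop :=
  (∀ i, AgencyTour G T (a i)) ∧
  ∀ i j : Fin k, i ≠ j →
    (∀ t ≤ T, a i t ≠ a j t) ∧
    (∀ t < T, ¬(a i t = a j (t + 1) ∧ a i (t + 1) = a j t ∧ a i t ≠ a i (t + 1)))

/-!
Upper bound. Suppose at most two vertices are vacant. If an agent crosses from `u` to `v`, the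
number of vacancies in the branch of the tree at `u` through `v` drops by exactly one, because
nobody can cross the edge in the opposite direction. Hence each agent has a home: the vertex it
occupies when no branch there holds two vacancies, and otherwise the neighbour towards the branch
holding all of them. No simultaneous move changes the home, so an agent only ever visits the home
and its neighbours, and visiting every vertex forces the tree to be a star.

Lower bound. With three vacancies every agent can advance to any neighbour, one slide at a time.
Vacancies travel freely inside a branch at the agent's position. If they lie in two branches, two
neighbours can be vacated. Otherwise they can be brought to the neighbour `w` in their common
branch and to two further neighbours of `w`, which exist because `w` does not have degree two.
Either way the agent has room to step aside while the vertex it wants is vacated. Slides are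
reversible, so the excursions bringing each agent to each vertex combine into closed tours.
-/

namespace Agency

open Set

variable {V ι : Type*} {G : SimpleGraph V} {c d : ι ↪ V} {p : ι} {u v w x y z : V}

/-! ### Branches -/

theorem of_reachable {P : V → Prop} (hP : ∀ ⦃x y⦄, G.Adj x y → P x → P y)
    (hxy : G.Reachable x y) (hx : P x) : P y := by
  obtain ⟨q⟩ := hxy
  induction q with
  | nil => exact hx
  | cons h _ ih => exact ih (hP h hx)

theorem exists_closed_walk_forall_mem_support (x : V) (s : Finset V)
    (hs : ∀ y ∈ s, G.Reachable x y) : ∃ q : G.Walk x x, ∀ y ∈ s, y ∈ q.support := by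
  classical
  induction s using Finset.induction_on with
  | empty => exact ⟨.nil, by simp⟩
  | insert y s _ ih =>
    obtain ⟨q, hq⟩ := ih fun z hz => hs z (Finset.mem_insert_of_mem hz)
    obtain ⟨r⟩ := hs y (Finset.mem_insert_self y s)
    refine ⟨q.append (r.append r.reverse), ?_⟩
    simp only [Walk.mem_support_append_iff, Finset.forall_mem_insert]
    exact ⟨.inr (.inl r.end_mem_support), fun z hz => .inl (hq z hz)⟩

theorem exists_adj_ne_ne [Fintype (G.neighborSet w)] (hw : G.degree w ≠ 2) (hx : G.Adj w x)
    (hy : G.Adj w y) (hxy : x ≠ y) : ∃ z, G.Adj w z ∧ z ≠ x ∧ z ≠ y := by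
  classical
  have hsub : {x, y} ⊆ G.neighborFinset w := by simp [Finset.insert_subset_iff, hx, hy]
  have hlt : ({x, y} : Finset V).card < (G.neighborFinset w).card := by
    have := Finset.card_le_card hsub
    rw [Finset.card_pair hxy, card_neighborFinset_eq_degree] at *
    omega
  obtain ⟨z, hz, hzxy⟩ := Finset.exists_mem_notMem_of_card_lt_card hlt
  exact ⟨z, by simpa using hz, by simpa using hzxy⟩

/-- The branch of `G` at the vertex `u` through `x`: the connected component of `x` in the graph
obtained from `G` by isolating `u`. It is meant for `x ≠ u`. -/
def branch (G : SimpleGraph V) (u x : V) : Set V :=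
  {y | (G.deleteIncidenceSet u).Reachable x y}

theorem mem_branch_self : x ∈ branch G u x := Reachable.refl x

theorem mem_branch_of_adj (hx : x ∈ branch G u w) (hxy : G.Adj x y) (hxu : x ≠ u) (hyu : y ≠ u) :
    y ∈ branch G u w :=
  Reachable.trans hx (Adj.reachable (deleteIncidenceSet_adj.2 ⟨hxy, hxu, hyu⟩))

theorem notMem_branch (hx : x ≠ u) : u ∉ branch G u x := fun h =>
  of_reachable (P := (· ≠ u)) (fun _ _ hyz _ => (deleteIncidenceSet_adj.1 hyz).2.2) h hx rfl

theorem eq_of_adj_of_mem_branch_of_notMem (hw : w ≠ u) (hx : x ∈ branch G u w) (hxy : G.Adj x y)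
    (hy : y ∉ branch G u w) : y = u := by
  by_contra hyu
  exact hy (mem_branch_of_adj hx hxy (fun h => notMem_branch hw (h ▸ hx)) hyu)

theorem exists_adj_mem_branch (hG : G.Connected) (hx : x ≠ u) :
    ∃ w, G.Adj u w ∧ x ∈ branch G u w := by
  refine of_reachable (P := fun x => x ≠ u → ∃ w, G.Adj u w ∧ x ∈ branch G u w) ?_
    (hG.preconnected u x) (absurd rfl) hx
  intro x y hxy ih hy
  obtain rfl | hxu := eq_or_ne x u
  · exact ⟨y, hxy, mem_branch_self⟩
  · obtain ⟨w, huw, hxw⟩ := ih hxu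
    exact ⟨w, huw, mem_branch_of_adj hxw hxy hxu hy⟩

theorem eq_of_mem_branch (hG : G.IsAcyclic) (hv : G.Adj u v) (hw : G.Adj u w)
    (hwv : w ∈ branch G u v) : v = w := by
  by_contra hne
  have hbridge : ¬ (G.deleteEdges {s(u, v)}).Reachable u v :=
    isBridge_iff.1 (isAcyclic_iff_forall_adj_isBridge.1 hG hv)
  have huw : (G.deleteEdges {s(u, v)}).Adj u w := by
    simp [deleteEdges_adj, hw, Ne.symm hne, hv.ne]
  have hle : G.deleteIncidenceSet u ≤ G.deleteEdges {s(u, v)} :=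
    deleteEdges_anti (by simpa [mk'_mem_incidenceSet_iff] using hv)
  exact hbridge (huw.reachable.trans (hwv.symm.mono hle))

theorem compl_branch (hG : G.IsTree) (huv : G.Adj u v) : (branch G u v)ᶜ = branch G v u := by
  ext x
  constructor
  · refine fun hx => of_reachable (P := fun x => x ∈ branch G u v ∨ x ∈ branch G v u) ?_
      (hG.connected.preconnected v x) (.inl mem_branch_self) |>.resolve_left hx
    rintro x y hxy (hx | hx) <;> by_contra! hy
    · exact hy.2 (eq_of_adj_of_mem_branch_of_notMem huv.ne' hx hxy hy.1 ▸ mem_branch_self)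
    · exact hy.1 (eq_of_adj_of_mem_branch_of_notMem huv.ne hx hxy hy.2 ▸ mem_branch_self)
  · refine fun hx => of_reachable (P := (· ∉ branch G u v)) ?_ hx (notMem_branch huv.ne')
    intro x y hxy hx hy
    obtain ⟨hadj, -, hyv⟩ := deleteIncidenceSet_adj.1 hxy
    obtain rfl := eq_of_adj_of_mem_branch_of_notMem huv.ne' hy hadj.symm hx
    exact hyv (eq_of_mem_branch hG.isAcyclic huv hadj hy).symm

theorem branch_subset_compl_branch (hG : G.IsAcyclic) (hv : G.Adj u v) (hw : G.Adj u w)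
    (hvw : v ≠ w) : branch G u v ⊆ (branch G u w)ᶜ := fun _ hxv hxw =>
  hvw (eq_of_mem_branch hG hv hw (Reachable.trans hxv (Reachable.symm hxw)))

/-! ### Configurations and vacancies -/

/-- The simultaneous crash-free moves between configurations: a vertex is a placement `c` of the
agents `ι` on distinct vertices of `G`, and `c` is adjacent to a different placement `d` if every
agent stays or crosses an edge, and no two agents swap places. -/
def moveGraph (G : SimpleGraph V) (ι : Type*) : SimpleGraph (ι ↪ V) where
  Adj c d := c ≠ d ∧ (∀ i, c i = d i ∨ G.Adj (c i) (d i)) ∧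
    ∀ i j, c i = d j → d i = c j → i = j
  symm := ⟨fun _ _ ⟨hne, hstep, hswap⟩ =>
    ⟨hne.symm, fun i => (hstep i).imp Eq.symm SimpleGraph.Adj.symm,
      fun i j hij hji => hswap i j hji hij⟩⟩
  loopless := ⟨fun _ h => h.1 rfl⟩

/-- The number of vertices of `S` that carry no agent in the configuration `c`. -/
noncomputable def vacancies (c : ι ↪ V) (S : Set V) : ℕ := (S \ range c).ncard

theorem ncard_preimage_add_vacancies [Finite V] (c : ι ↪ V) (S : Set V) :
    (c ⁻¹' S).ncard + vacancies c S = S.ncard := by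
  rw [← ncard_image_of_injective (c ⁻¹' S) c.injective, image_preimage_eq_inter_range]
  exact ncard_inter_add_ncard_sdiff_eq_ncard S (range c)

theorem card_add_vacancies_univ [Finite V] (c : ι ↪ V) :
    Nat.card ι + vacancies c univ = Nat.card V := by
  simpa using ncard_preimage_add_vacancies c univ

theorem vacancies_add_vacancies_compl [Finite V] (c : ι ↪ V) (S : Set V) :
    vacancies c S + vacancies c Sᶜ = vacancies c univ := by
  rw [vacancies, vacancies, vacancies, ← ncard_union_eq (by grind), ← union_sdiff_distrib,
    union_compl_self]

theorem vacancies_mono [Finite V] (c : ι ↪ V) {S S' : Set V} (h : S ⊆ S') :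
    vacancies c S ≤ vacancies c S' :=
  ncard_le_ncard (sdiff_subset_sdiff_left h)

/-! ### At most two vacancies -/

theorem mem_branch_of_adj_moveGraph {i : ι} (hcd : (moveGraph G ι).Adj c d) (hp : c p = d p)
    (hv : v ≠ c p) (hi : c i ∈ branch G (c p) v) : d i ∈ branch G (c p) v := by
  by_contra hdi
  obtain heq | hadj := hcd.2.1 i
  · exact hdi (heq ▸ hi)
  · have hip : i = p :=
      d.injective ((eq_of_adj_of_mem_branch_of_notMem hv hi hadj hdi).trans hp)
    exact notMem_branch hv (hip ▸ hi)

theorem vacancies_branch_of_apply_eq [Finite V] (hcd : (moveGraph G ι).Adj c d) (hp : c p = d p)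
    (hv : v ≠ c p) : vacancies d (branch G (c p) v) = vacancies c (branch G (c p) v) := by
  have hpre : d ⁻¹' branch G (c p) v = c ⁻¹' branch G (c p) v := by
    ext i
    refine ⟨fun hi => ?_, mem_branch_of_adj_moveGraph hcd hp hv⟩
    rw [mem_preimage, hp] at hi ⊢
    exact mem_branch_of_adj_moveGraph hcd.symm hp.symm (hp ▸ hv) hi
  have hc := ncard_preimage_add_vacancies c (branch G (c p) v)
  have hd := ncard_preimage_add_vacancies d (branch G (c p) v)
  rw [hpre] at hd
  omega

theorem preimage_branch_of_adj (hG : G.IsTree) (hcd : (moveGraph G ι).Adj c d)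
    (hp : G.Adj (c p) (d p)) :
    d ⁻¹' branch G (c p) (d p) = insert p (c ⁻¹' branch G (c p) (d p)) := by
  ext i
  refine ⟨fun hi => ?_, ?_⟩
  · by_contra! hip
    simp only [mem_insert_iff, mem_preimage, not_or] at hi hip
    obtain heq | hadj := hcd.2.1 i
    · exact hip.2 (heq ▸ hi)
    · exact hip.1 (c.injective (eq_of_adj_of_mem_branch_of_notMem hp.ne' hi hadj.symm hip.2))
  · rintro (rfl | hi)
    · exact mem_branch_self
    rw [mem_preimage] at hi ⊢
    -- An agent leaving the branch would cross the edge against `p`.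
    by_contra hdi
    obtain heq | hadj := hcd.2.1 i
    · exact hdi (heq ▸ hi)
    have hdi' : d i ∈ branch G (d p) (c p) := compl_branch hG hp ▸ hdi
    have hci' : c i ∉ branch G (d p) (c p) := compl_branch hG hp ▸ not_not_intro hi
    have hip : i = p := hcd.2.2 i p
      (eq_of_adj_of_mem_branch_of_notMem hp.ne hdi' hadj.symm hci')
      (eq_of_adj_of_mem_branch_of_notMem hp.ne' hi hadj hdi)
    exact notMem_branch hp.ne' (hip ▸ hi)

theorem vacancies_branch_of_adj [Finite V] (hG : G.IsTree) (hcd : (moveGraph G ι).Adj c d)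
    (hp : G.Adj (c p) (d p)) :
    vacancies c (branch G (c p) (d p)) = vacancies d (branch G (c p) (d p)) + 1 := by
  have : Finite ι := Finite.of_injective c c.injective
  have hc := ncard_preimage_add_vacancies c (branch G (c p) (d p))
  have hd := ncard_preimage_add_vacancies d (branch G (c p) (d p))
  rw [preimage_branch_of_adj hG hcd hp,
    ncard_insert_of_notMem (show p ∉ c ⁻¹' branch G (c p) (d p) from notMem_branch hp.ne')] at hd
  omega

/-- A home of agent `p` in a configuration with at most two vacancies: the position of `p` if no
branch there contains two vacancies, or a neighbour towards a branch containing all vacancies. It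
serves as an invariant of the moves. -/
def IsHome (G : SimpleGraph V) (c : ι ↪ V) (p : ι) (h : V) : Prop :=
  (c p = h ∧ ∀ v, G.Adj h v → vacancies c (branch G h v) ≤ 1) ∨
    (G.Adj (c p) h ∧ vacancies c (branch G (c p) h)ᶜ = 0)

theorem exists_isHome [Finite V] (c : ι ↪ V) (p : ι) (hc : vacancies c univ ≤ 2) :
    ∃ h, IsHome G c p h := by
  by_cases hle : ∀ v, G.Adj (c p) v → vacancies c (branch G (c p) v) ≤ 1
  · exact ⟨c p, .inl ⟨rfl, hle⟩⟩
  · push Not at hle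
    obtain ⟨h, hadj, hlt⟩ := hle
    have := vacancies_add_vacancies_compl c (branch G (c p) h)
    exact ⟨h, .inr ⟨hadj, by omega⟩⟩

theorem IsHome.of_apply_eq [Finite V] (hcd : (moveGraph G ι).Adj c d) (hp : c p = d p)
    (hc : IsHome G c p u) : IsHome G d p u := by
  rcases hc with ⟨rfl, hle⟩ | ⟨hadj, hzero⟩
  · exact .inl ⟨hp.symm, fun v hv =>
      (vacancies_branch_of_apply_eq hcd hp hv.ne').trans_le (hle v hv)⟩
  · have hsum := vacancies_add_vacancies_compl c (branch G (c p) u)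
    have hsum' := vacancies_add_vacancies_compl d (branch G (c p) u)
    have heq := vacancies_branch_of_apply_eq hcd hp hadj.ne'
    have := card_add_vacancies_univ c
    have := card_add_vacancies_univ d
    exact .inr (hp ▸ ⟨hadj, by omega⟩)

theorem IsHome.of_apply_adj [Finite V] (hG : G.IsTree) (hcard : Nat.card V ≤ Nat.card ι + 2)
    (hcd : (moveGraph G ι).Adj c d) (hp : G.Adj (c p) (d p)) (hc : IsHome G c p u) :
    IsHome G d p u := by
  have hdec := vacancies_branch_of_adj hG hcd hp
  rcases hc with ⟨rfl, hle⟩ | ⟨hadj, hzero⟩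
  · have hle' := hle _ hp
    refine .inr ⟨hp.symm, ?_⟩
    rw [← compl_branch hG hp, compl_compl]
    omega
  obtain rfl | hne := eq_or_ne u (d p)
  · have hsum := vacancies_add_vacancies_compl c (branch G (c p) (d p))
    have hsum' := vacancies_add_vacancies_compl d (branch G (c p) (d p))
    have := card_add_vacancies_univ c
    have := card_add_vacancies_univ d
    refine .inl ⟨rfl, fun v hv => ?_⟩
    obtain rfl | hvc := eq_or_ne v (c p)
    · rw [← compl_branch hG hp]
      omega
    · have hmono := vacancies_mono d (branch_subset_compl_branch hG.isAcyclic hv hp.symm hvc)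
      rw [compl_branch hG hp.symm] at hmono
      omega
  · have hmono := vacancies_mono c (branch_subset_compl_branch hG.isAcyclic hp hadj hne.symm)
    omega

theorem IsHome.of_adj [Finite V] (hG : G.IsTree) (hcard : Nat.card V ≤ Nat.card ι + 2)
    (hcd : (moveGraph G ι).Adj c d) (hc : IsHome G c p u) : IsHome G d p u :=
  (hcd.2.1 p).elim (fun hp => hc.of_apply_eq hcd hp) fun hp => hc.of_apply_adj hG hcard hcd hp

theorem IsHome.eq_or_adj (hc : IsHome G c p u) : c p = u ∨ G.Adj (c p) u :=
  hc.imp And.left And.left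

section FeasibleAgency

variable {k T t : ℕ} {a : Fin k → ℕ → V}

/-- The configuration of a feasible agency at time `t`. -/
def configuration (ha : FeasibleAgency G k T a) (ht : t ≤ T) : Fin k ↪ V where
  toFun i := a i t
  inj' i j hij := by
    by_contra hne
    exact (ha.2 i j hne).1 t ht hij

theorem configuration_eq_or_adj (ha : FeasibleAgency G k T a) (ht : t < T) :
    configuration ha ht.le = configuration ha (Nat.succ_le_of_lt ht) ∨
      (moveGraph G (Fin k)).Adj (configuration ha ht.le)
        (configuration ha (Nat.succ_le_of_lt ht)) := by
  refine or_iff_not_imp_left.2 fun hne => ⟨hne, fun i => (ha.1 i).1 t ht, fun i j hij hji => ?_⟩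
  by_contra hij'
  obtain ⟨hnode, hedge⟩ := ha.2 i j hij'
  exact hedge t ht ⟨hij, hji, fun h => hnode t ht.le (h.trans hji)⟩

theorem isHome_configuration [Finite V] (hG : G.IsTree) (hk : Nat.card V ≤ k + 2)
    (ha : FeasibleAgency G k T a) {p : Fin k} (h₀ : IsHome G (configuration ha (Nat.zero_le T)) p u)
    (ht : t ≤ T) : IsHome G (configuration ha ht) p u := by
  induction t with
  | zero => exact h₀
  | succ t ih =>
    obtain heq | hadj := configuration_eq_or_adj ha ht
    · exact heq ▸ ih (Nat.le_of_lt ht)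
    · exact (ih (Nat.le_of_lt ht)).of_adj hG (by simpa using hk) hadj

theorem exists_forall_adj_of_feasibleAgency [Finite V] (hG : G.IsTree) (hk₀ : 0 < k)
    (hk : Nat.card V ≤ k + 2) (ha : FeasibleAgency G k T a) :
    ∃ u, ∀ v, v ≠ u → G.Adj u v := by
  have hvac := card_add_vacancies_univ (configuration ha (Nat.zero_le T))
  rw [Nat.card_fin] at hvac
  obtain ⟨u, hu⟩ := exists_isHome (G := G) (configuration ha (Nat.zero_le T)) ⟨0, hk₀⟩ (by omega)
  refine ⟨u, fun v hv => ?_⟩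
  obtain ⟨t, ht, rfl⟩ := (ha.1 ⟨0, hk₀⟩).2.1 v
  exact ((isHome_configuration hG hk ha hu ht).eq_or_adj.resolve_left hv).symm

end FeasibleAgency

/-! ### At least three vacancies -/

/-- The moves of `moveGraph` in which a single agent slides to a vacant neighbour. -/
def slideGraph (G : SimpleGraph V) (ι : Type*) : SimpleGraph (ι ↪ V) where
  Adj c d := ∃ p, G.Adj (c p) (d p) ∧ d p ∉ range c ∧ ∀ i, i ≠ p → d i = c i
  symm := ⟨by
    rintro c d ⟨p, hadj, hvac, hfix⟩
    refine ⟨p, hadj.symm, ?_, fun i hi => (hfix i hi).symm⟩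
    rintro ⟨i, hi⟩
    obtain rfl | hip := eq_or_ne i p
    · exact hadj.ne hi.symm
    · exact hip (c.injective (hfix i hip ▸ hi))⟩
  loopless := ⟨fun _ ⟨_, hadj, _⟩ => hadj.ne rfl⟩

theorem slideGraph_le_moveGraph : slideGraph G ι ≤ moveGraph G ι := by
  rintro c d ⟨p, hadj, hvac, hfix⟩
  refine ⟨?_, fun i => ?_, fun i j hij hji => ?_⟩
  · rintro rfl
    exact hadj.ne rfl
  · obtain rfl | hip := eq_or_ne i p
    · exact .inr hadj
    · exact .inl (hfix i hip).symm
  · obtain rfl | hip := eq_or_ne i p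
    · exact absurd ⟨j, hji.symm⟩ hvac
    · exact d.injective (hfix i hip ▸ hij)

theorem slideGraph_mono {H : SimpleGraph V} (h : H ≤ G) : slideGraph H ι ≤ slideGraph G ι :=
  fun _ _ ⟨p, hadj, hrest⟩ => ⟨p, h hadj, hrest⟩

theorem apply_eq_of_reachable_slideGraph_deleteIncidenceSet
    (hcd : (slideGraph (G.deleteIncidenceSet (c p)) ι).Reachable c d) : d p = c p := by
  refine of_reachable (P := fun d => d p = c p) ?_ hcd rfl
  rintro d e ⟨q, hadj, -, hfix⟩ hd
  have hpq : p ≠ q := fun h => (deleteIncidenceSet_adj.1 hadj).2.1 (h ▸ hd)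
  rw [hfix p hpq, hd]

theorem exists_slideGraph_adj (hadj : G.Adj (c p) y) (hy : y ∉ range c) :
    ∃ d, (slideGraph G ι).Adj c d ∧ d p = y ∧ range d = insert y (range c \ {c p}) := by
  classical
  have hfix : ∀ i, i ≠ p → c.setValue p y i = c i := fun i hi =>
    Function.Embedding.setValue_eq_of_ne hi fun h => hy ⟨i, h⟩
  have hp : c.setValue p y p = y := c.setValue_eq p y
  refine ⟨c.setValue p y, ⟨p, by rwa [hp], by rwa [hp], hfix⟩, hp, ?_⟩
  ext x
  simp only [mem_range, mem_insert_iff, mem_sdiff, mem_singleton_iff]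
  constructor
  · rintro ⟨i, rfl⟩
    obtain rfl | hi := eq_or_ne i p
    · exact .inl hp
    · exact .inr ⟨⟨i, (hfix i hi).symm⟩, fun h => hi (c.injective (hfix i hi ▸ h))⟩
  · rintro (rfl | ⟨⟨i, rfl⟩, hi⟩)
    · exact ⟨p, hp⟩
    · exact ⟨i, hfix i fun h => hi (h ▸ rfl)⟩

theorem exists_reachable_vacating_of_adj (hxy : G.Adj x y) (hx : x ∉ range c) :
    ∃ d, (slideGraph G ι).Reachable c d ∧ y ∉ range d ∧ range d ⊆ insert x (range c) := by
  by_cases hy : y ∈ range c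
  · obtain ⟨i, rfl⟩ := hy
    obtain ⟨d, hcd, -, hd⟩ := exists_slideGraph_adj hxy.symm hx
    exact ⟨d, hcd.reachable, by simp [hd, hxy.ne'],
      hd ▸ insert_subset_insert sdiff_subset⟩
  · exact ⟨c, .rfl, hy, subset_insert x _⟩

theorem exists_reachable_vacating (hxy : G.Reachable x y) (hx : x ∉ range c) :
    ∃ d, (slideGraph G ι).Reachable c d ∧ y ∉ range d ∧ range d ⊆ insert x (range c) := by
  obtain ⟨q⟩ := hxy
  induction q generalizing c with
  | nil => exact ⟨c, .rfl, hx, subset_insert _ _⟩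
  | @cons x z y hxz _ ih =>
    by_cases hy : y ∉ range c
    · exact ⟨c, .rfl, hy, subset_insert _ _⟩
    by_cases hz : z ∈ range c
    · obtain ⟨d, hcd, hzd, hd⟩ := exists_reachable_vacating_of_adj hxz hx
      obtain ⟨e, hde, hye, he⟩ := ih hzd
      exact ⟨e, hcd.trans hde, hye, by grind⟩
    · obtain ⟨d, hcd, hyd, hd⟩ := ih hz
      have hxd : x ∉ range d := fun h => (hd h).elim hxz.ne hx
      obtain ⟨e, hde, hze, he⟩ := exists_reachable_vacating_of_adj hxz hxd
      exact ⟨e, hcd.trans hde, by grind, by grind⟩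

theorem exists_reachable_vacating_fixing (hxy : y ∈ branch G (c p) x) (hx : x ∉ range c) :
    ∃ d, (slideGraph G ι).Reachable c d ∧ d p = c p ∧ y ∉ range d ∧
      range d ⊆ insert x (range c) := by
  obtain ⟨d, hcd, hyd, hd⟩ := exists_reachable_vacating hxy hx
  exact ⟨d, hcd.mono (slideGraph_mono (deleteIncidenceSet_le G _)),
    apply_eq_of_reachable_slideGraph_deleteIncidenceSet hcd, hyd, hd⟩

theorem exists_reachable_vacating_finset [Finite V] (s : Finset V)
    (hs : ∀ y ∈ s, y ∈ branch G (c p) w) (hcard : s.card ≤ vacancies c (branch G (c p) w)) :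
    ∃ d, (slideGraph G ι).Reachable c d ∧ d p = c p ∧ (∀ y ∈ s, y ∉ range d) ∧
      vacancies c (branch G (c p) w) ≤ vacancies d (branch G (c p) w) := by
  classical
  set B := branch G (c p) w
  induction s using Finset.induction_on with
  | empty => exact ⟨c, .rfl, rfl, by simp, le_rfl⟩
  | insert y s hys ih =>
    simp only [Finset.forall_mem_insert] at hs ⊢
    rw [Finset.card_insert_of_notMem hys] at hcard
    obtain ⟨d, hcd, hdp, hsd, hBd⟩ := ih hs.2 (by omega)
    by_cases hyd : y ∉ range d
    · exact ⟨d, hcd, hdp, ⟨hyd, hsd⟩, hBd⟩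
    obtain ⟨x, ⟨hxB, hxd⟩, hxs⟩ : ∃ x ∈ B \ range d, x ∉ (s : Set V) :=
      exists_mem_notMem_of_ncard_lt_ncard (by
        rw [ncard_coe_finset]
        exact lt_of_lt_of_le hcard hBd)
    have hxy : y ∈ branch G (d p) x := hdp ▸ (Reachable.symm hxB).trans hs.1
    obtain ⟨e, hde, hep, hye, he⟩ := exists_reachable_vacating_fixing hxy hxd
    refine ⟨e, hcd.trans hde, hep.trans hdp, ⟨hye, fun z hz hze => ?_⟩, hBd.trans ?_⟩
    · exact (he hze).elim (fun h => hxs (h ▸ hz)) (hsd z hz)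
    · have hsub : insert y ((B \ range d) \ {x}) ⊆ B \ range e := by grind
      have hexch : (insert y ((B \ range d) \ {x})).ncard = (B \ range d).ncard :=
        ncard_exchange (fun h => hyd h.2) (show x ∈ B \ range d from ⟨hxB, hxd⟩)
      exact hexch.symm.trans_le (ncard_le_ncard hsub)

/-- Agent `p` steps aside to `w`, the vacancy `z` is moved past it to `v`, and `p` returns and
takes `v`. -/
theorem exists_reachable_apply_eq_of_two_vacant_adj (hv : G.Adj (c p) v) (hw : G.Adj (c p) w)
    (hz : G.Adj (c p) z) (hwz : w ≠ z) (hwc : w ∉ range c) (hzc : z ∉ range c) :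
    ∃ d, (slideGraph G ι).Reachable c d ∧ d p = v ∧ range d ⊆ insert v (insert z (range c)) := by
  obtain rfl | hvw := eq_or_ne v w
  · obtain ⟨d, hcd, hdp, hd⟩ := exists_slideGraph_adj hv hwc
    exact ⟨d, hcd.reachable, hdp, by grind⟩
  obtain ⟨c₁, h₁, hp₁, hc₁⟩ := exists_slideGraph_adj hw hwc
  have hzv : v ∈ branch G (c₁ p) z := by
    rw [hp₁]
    exact mem_branch_of_adj (mem_branch_of_adj mem_branch_self hz.symm hwz.symm hw.ne) hv
      hw.ne hvw
  obtain ⟨c₂, h₂, hp₂, hv₂, hc₂⟩ := exists_reachable_vacating_fixing hzv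
    (by grind : z ∉ range c₁)
  rw [hp₁] at hp₂
  have hu₂ : c p ∉ range c₂ := by grind [hz.ne, hw.ne]
  have hsub₂ : range c₂ \ {w} ⊆ insert z (range c) := by grind
  obtain ⟨c₃, h₃, hp₃, hc₃⟩ := exists_slideGraph_adj (p := p) (hp₂ ▸ hw.symm) hu₂
  have hv₃ : v ∉ range c₃ := by grind [hv.ne]
  obtain ⟨c₄, h₄, hp₄, hc₄⟩ := exists_slideGraph_adj (p := p) (hp₃ ▸ hv) hv₃
  refine ⟨c₄, h₁.reachable.trans (h₂.trans (h₃.reachable.trans h₄.reachable)), hp₄, ?_⟩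
  rw [hc₄, hc₃, hp₂, hp₃, insert_sdiff_self_of_notMem fun h => hu₂ h.1]
  exact insert_subset_insert hsub₂

/-- Agent `p` enters the cherry at `w` and the vacancy it leaves behind is moved to `v`; two vacant
neighbours then let it turn round. -/
theorem exists_reachable_apply_eq_of_vacant_cherry (hv : G.Adj (c p) v) (hw : G.Adj (c p) w)
    (hx : G.Adj w x) (hy : G.Adj w y) (hxy : x ≠ y) (hxp : x ≠ c p) (hyp : y ≠ c p)
    (hwc : w ∉ range c) (hxc : x ∉ range c) (hyc : y ∉ range c) :
    ∃ d, (slideGraph G ι).Reachable c d ∧ d p = v := by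
  by_cases hvc : v ∉ range c
  · obtain ⟨d, hcd, hdp, -⟩ := exists_slideGraph_adj hv hvc
    exact ⟨d, hcd.reachable, hdp⟩
  obtain ⟨c₁, h₁, hp₁, hc₁⟩ := exists_slideGraph_adj hw hwc
  have huv : v ∈ branch G (c₁ p) (c p) := by
    rw [hp₁]
    exact mem_branch_of_adj mem_branch_self hv hw.ne (by grind)
  obtain ⟨c₂, h₂, hp₂, hv₂, hc₂⟩ := exists_reachable_vacating_fixing huv
    (by grind [hw.ne] : c p ∉ range c₁)
  rw [hp₁] at hp₂
  obtain ⟨c₃, h₃, hp₃, hc₃⟩ := exists_reachable_apply_eq_of_two_vacant_adj (p := p) (c := c₂)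
    (hp₂ ▸ hw.symm) (hp₂ ▸ hx) (hp₂ ▸ hy) hxy (by grind [hx.ne]) (by grind [hy.ne])
  obtain ⟨c₄, h₄, hp₄, -⟩ := exists_slideGraph_adj (p := p) (c := c₃) (y := v) (hp₃ ▸ hv)
    (by grind [hv.ne])
  exact ⟨c₄, h₁.reachable.trans (h₂.trans (h₃.trans h₄.reachable)), hp₄⟩

theorem exists_reachable_apply_eq_of_separated_vacancies (hG : G.Connected) (hv : G.Adj (c p) v)
    (hx : x ∉ range c) (hy : y ∉ range c) (hxy : y ∉ branch G (c p) x) :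
    ∃ d, (slideGraph G ι).Reachable c d ∧ d p = v := by
  obtain ⟨w, hw, hxw⟩ := exists_adj_mem_branch hG (u := c p) (by grind : x ≠ c p)
  obtain ⟨z, hz, hyz⟩ := exists_adj_mem_branch hG (u := c p) (by grind : y ≠ c p)
  have hwy : w ≠ y := by
    rintro rfl
    exact hxy hxw.symm
  have hwz : w ≠ z := by
    rintro rfl
    exact hxy (hxw.symm.trans hyz)
  obtain ⟨d, hcd, hdp, hwd, hd⟩ := exists_reachable_vacating_fixing hxw.symm hx
  have hyd : y ∉ range d := fun h => (hd h).elim (fun h => hxy (h ▸ mem_branch_self)) hy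
  obtain ⟨e, hde, hep, hze, he⟩ := exists_reachable_vacating_fixing (p := p) (x := y) (y := z)
    (hdp ▸ hyz.symm) hyd
  rw [hdp] at hep
  obtain ⟨f, hef, hfp, -⟩ := exists_reachable_apply_eq_of_two_vacant_adj (p := p) (c := e)
    (hep ▸ hv) (hep ▸ hw) (hep ▸ hz) hwz (by grind) hze
  exact ⟨f, hcd.trans (hde.trans hef), hfp⟩

theorem exists_reachable_apply_eq_of_three_le_vacancies_branch [Finite V]
    [Fintype (G.neighborSet w)] (hdeg : G.degree w ≠ 2) (hv : G.Adj (c p) v) (hw : G.Adj (c p) w)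
    (hvac : 3 ≤ vacancies c (branch G (c p) w)) :
    ∃ d, (slideGraph G ι).Reachable c d ∧ d p = v := by
  classical
  obtain ⟨b, hb, hbw⟩ : ∃ b ∈ branch G (c p) w, b ∉ ({w} : Set V) := by
    refine exists_mem_notMem_of_ncard_lt_ncard ?_
    have := ncard_preimage_add_vacancies c (branch G (c p) w)
    rw [ncard_singleton]
    omega
  obtain ⟨x, hx, hxp⟩ : ∃ x, G.Adj w x ∧ x ≠ c p := by
    obtain ⟨q⟩ := hb
    cases q with
    | nil => exact absurd rfl hbw
    | cons h _ => exact ⟨_, (deleteIncidenceSet_adj.1 h).1, (deleteIncidenceSet_adj.1 h).2.2⟩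
  obtain ⟨y, hy, hyx, hyp⟩ := exists_adj_ne_ne hdeg hx hw.symm hxp
  have hmem : ∀ a ∈ ({w, x, y} : Finset V), a ∈ branch G (c p) w := by
    simp only [Finset.forall_mem_insert, Finset.mem_singleton, forall_eq]
    exact ⟨mem_branch_self, mem_branch_of_adj mem_branch_self hx hw.ne' hxp,
      mem_branch_of_adj mem_branch_self hy hw.ne' hyp⟩
  obtain ⟨d, hcd, hdp, hd, -⟩ :=
    exists_reachable_vacating_finset _ hmem (Finset.card_le_three.trans hvac)
  simp only [Finset.forall_mem_insert, Finset.mem_singleton, forall_eq] at hd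
  obtain ⟨e, hde, hep⟩ := exists_reachable_apply_eq_of_vacant_cherry (p := p) (c := d)
    (hdp ▸ hv) (hdp ▸ hw) hx hy hyx.symm (hdp ▸ hxp) (hdp ▸ hyp) hd.1 hd.2.1 hd.2.2
  exact ⟨e, hcd.trans hde, hep⟩

theorem exists_reachable_apply_eq_of_adj [Finite V] [G.LocallyFinite] (hG : G.Connected)
    (hdeg : ∀ v, G.degree v ≠ 2) (hcard : Nat.card ι + 3 ≤ Nat.card V) (hv : G.Adj (c p) v) :
    ∃ d, (slideGraph G ι).Reachable c d ∧ d p = v := by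
  have hvac := card_add_vacancies_univ c
  obtain ⟨x, -, hx⟩ : (univ \ range c).Nonempty :=
    nonempty_of_ncard_ne_zero (by unfold vacancies at hvac; omega)
  by_cases hsep : ∀ y ∉ range c, y ∈ branch G (c p) x
  · obtain ⟨w, hw, hxw⟩ := exists_adj_mem_branch hG (u := c p) (by grind : x ≠ c p)
    refine exists_reachable_apply_eq_of_three_le_vacancies_branch (hdeg w) hv hw ?_
    have hsub : univ \ range c ⊆ branch G (c p) w \ range c :=
      fun y hy => ⟨hxw.trans (hsep y hy.2), hy.2⟩
    have : vacancies c univ ≤ vacancies c (branch G (c p) w) := ncard_le_ncard hsub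
    omega
  · push Not at hsep
    obtain ⟨y, hy, hxy⟩ := hsep
    exact exists_reachable_apply_eq_of_separated_vacancies hG hv hx hy hxy

theorem exists_reachable_apply_eq [Finite V] [G.LocallyFinite] (hG : G.Connected)
    (hdeg : ∀ v, G.degree v ≠ 2) (hcard : Nat.card ι + 3 ≤ Nat.card V) (c : ι ↪ V) (p : ι)
    (v : V) : ∃ d, (slideGraph G ι).Reachable c d ∧ d p = v := by
  refine of_reachable (P := fun v => ∃ d, (slideGraph G ι).Reachable c d ∧ d p = v) ?_
    (hG.preconnected (c p) v) ⟨c, .rfl, rfl⟩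
  rintro _ y hadj ⟨d, hcd, rfl⟩
  obtain ⟨e, hde, hep⟩ := exists_reachable_apply_eq_of_adj hG hdeg hcard hadj
  exact ⟨e, hcd.trans hde, hep⟩

theorem feasibleAgency_getVert {k : ℕ} {c : Fin k ↪ V} (q : (moveGraph G (Fin k)).Walk c c)
    (hq : ∀ i v, ∃ d ∈ q.support, d i = v) :
    FeasibleAgency G k q.length fun i t => q.getVert t i := by
  refine ⟨fun i => ⟨fun t ht => (q.adj_getVert_succ ht).2.1 i, fun v => ?_, by simp⟩,
    fun i j hij => ⟨fun t _ h => hij ((q.getVert t).injective h), fun t ht h => ?_⟩⟩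
  · obtain ⟨d, hd, hdi⟩ := hq i v
    obtain ⟨t, rfl, ht⟩ := Walk.mem_support_iff_exists_getVert.1 hd
    exact ⟨t, ht, hdi⟩
  · exact hij ((q.adj_getVert_succ ht).2.2 i j h.1 h.2.1)

theorem exists_feasibleAgency [Finite V] [G.LocallyFinite] (hG : G.Connected)
    (hdeg : ∀ v, G.degree v ≠ 2) {k : ℕ} (hk : k + 3 ≤ Nat.card V) :
    ∃ T a, FeasibleAgency G k T a := by
  have := Fintype.ofFinite V
  obtain ⟨c⟩ : Nonempty (Fin k ↪ V) :=
    Function.Embedding.nonempty_of_card_le (by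
      rw [Fintype.card_fin, ← Nat.card_eq_fintype_card]
      omega)
  choose D hcD hDi using fun x : Fin k × V =>
    exists_reachable_apply_eq hG hdeg (by simpa using hk) c x.1 x.2
  classical
  obtain ⟨q, hq⟩ := exists_closed_walk_forall_mem_support c (Finset.univ.image D) fun d hd => by
    obtain ⟨x, -, rfl⟩ := Finset.mem_image.1 hd
    exact (hcD x).mono slideGraph_le_moveGraph
  exact ⟨q.length, _, feasibleAgency_getVert q fun i v =>
    ⟨D (i, v), hq _ (Finset.mem_image_of_mem D (Finset.mem_univ _)), hDi _⟩⟩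

end Agency

/-- for a tree on `n ≥ 4` vertices with no vertex of degree 2 and
which is not a star, the maximum number of agents in a feasible agency (over all
time horizons) is `n - 3`. -/
theorem stmt13 {V : Type*} [Fintype V] (G : SimpleGraph V) [DecidableRel G.Adj]
    (hG : G.IsTree) (hn : 4 ≤ Fintype.card V)
    (hdeg : ∀ v : V, G.degree v ≠ 2)
    (hnotstar : ¬ ∃ c : V, ∀ v : V, v ≠ c → G.Adj c v) :
    IsGreatest {k : ℕ | ∃ T : ℕ, ∃ a : Fin k → ℕ → V, FeasibleAgency G k T a}
      (Fintype.card V - 3) := by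
  rw [← Nat.card_eq_fintype_card] at hn ⊢
  constructor
  · exact Agency.exists_feasibleAgency hG.connected hdeg (by omega)
  · rintro k ⟨T, a, ha⟩
    by_contra! hk
    exact hnotstar (Agency.exists_forall_adj_of_feasibleAgency hG (by omega) (by omega) ha)
end

section
/- Let G be a tree on n ≥ 4 vertices in which no vertex has degree 2 and which is not a star. Suppose n − 3 agents occupy pairwise distinct vertices of G, agent i occupies vertex u, and uv is an edge of G. Then there exist a length S and a sequence of configurations f_0, f_1, …, f_S (each f_t an injective map from the set of agents to the vertices of G) such that f_0 is the given configuration, for every agent j and every 0 ≤ t < S either f_t(j) = f_{t+1}(j) or f_t(j)f_{t+1}(j) is an edge of G, no two distinct agents j, j' satisfy f_t(j) = f_{t+1}(j') and f_{t+1}(j) = f_t(j') with f_t(j) ≠ f_{t+1}(j) for any 0 ≤ t < S, and f_S(i) = v. -/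
open SimpleGraph

/-!
Call a vertex carrying no agent a hole, and keep agent `i` at `u` while other agents move. Holes
then travel freely within each component of `G - u`, and `i` can trade places with an agent on its
neighbour `v` as soon as two walks through holes lead from `u` to `a` and to `b`, the first avoiding
`b` and the second avoiding `a`: agent `i` waits at `a` while the agent on `v` passes through `u` on
its way to `b`.

If two holes lie in different components of `G - u`, bring each of them to a neighbour of `u`; these
neighbours are `a` and `b`. Otherwise all holes lie in the component of one neighbour `w` of `u`.
This component contains a vertex besides `w`, so `w` has degree at least two, hence at least three.
Three holes can therefore be brought to `w` and to two further neighbours `a`, `b` of `w`.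
-/

theorem exists_seq_of_reflTransGen {α : Type*} {r : α → α → Prop} {a b : α}
    (h : Relation.ReflTransGen r a b) :
    ∃ (n : ℕ) (s : ℕ → α), s 0 = a ∧ (∀ t < n, r (s t) (s (t + 1))) ∧ s n = b := by
  induction h using Relation.ReflTransGen.head_induction_on with
  | refl => exact ⟨0, fun _ => b, rfl, by simp, rfl⟩
  | @head a c hac _ ih =>
    obtain ⟨n, s, rfl, hs, rfl⟩ := ih
    refine ⟨n + 1, fun t => t.casesOn a s, rfl, fun t ht => ?_, rfl⟩
    cases t with
    | zero => exact hac
    | succ t => exact hs t (by lia)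

theorem encard_compl_range {α β : Type*} [Fintype α] [Fintype β] {f : α → β}
    (hf : Function.Injective f) :
    (Set.range f)ᶜ.encard = (Fintype.card β - Fintype.card α : ℕ) := by
  classical
  rw [← Set.coe_toFinset (Set.range f)ᶜ, Set.encard_coe_eq_coe_finsetCard, Set.toFinset_compl,
    Finset.card_compl, Set.toFinset_range, Finset.card_image_of_injective _ hf, Finset.card_univ]

section Graph

variable {V : Type*} {G : SimpleGraph V}

theorem encard_neighborSet_eq_degree (w : V) [Fintype (G.neighborSet w)] :
    (G.neighborSet w).encard = G.degree w := by
  rw [← coe_neighborFinset, Set.encard_coe_eq_coe_finsetCard, card_neighborFinset_eq_degree]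

theorem exists_adj_reachable_deleteIncidenceSet {u x : V} (h : G.Reachable u x) (hxu : x ≠ u) :
    ∃ a, G.Adj u a ∧ (G.deleteIncidenceSet u).Reachable a x := by
  obtain ⟨p, hp⟩ := h.exists_isPath
  cases p with
  | nil => exact absurd rfl hxu
  | @cons _ a _ hua q =>
    rw [Walk.cons_isPath_iff] at hp
    refine ⟨a, hua, ⟨q.transfer _ fun e he => ?_⟩⟩
    rw [edgeSet_deleteIncidenceSet]
    exact ⟨q.edges_subset_edgeSet he, fun hu => hp.2 (Walk.mem_support_of_mem_edges he hu.2)⟩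

theorem exists_adj_ne_of_encard_neighborSet_ne_two {w x y : V}
    (h : (G.neighborSet w).encard ≠ 2) (hx : G.Adj w x) (hy : G.Adj w y) (hxy : x ≠ y) :
    ∃ z, G.Adj w z ∧ z ≠ x ∧ z ≠ y := by
  by_contra! hz
  refine h (Set.encard_eq_two.2 ⟨x, y, hxy, Set.ext fun z => ⟨fun hwz => ?_, ?_⟩⟩)
  · exact or_iff_not_imp_left.2 (hz z hwz)
  · rintro (rfl | rfl) <;> assumption

end Graph

section Reconfiguration

variable {V ι : Type*} {G : SimpleGraph V} {f : ι ↪ V} {i j : ι}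

/-- A feasible move between two configurations. Configurations are embeddings of the agents into
the vertices, which accounts for the injectivity of a placement. -/
structure FeasibleMove (G : SimpleGraph V) (f f' : ι ↪ V) : Prop where
  stay_or_adj : ∀ j, f j = f' j ∨ G.Adj (f j) (f' j)
  not_swap : ∀ j j', j ≠ j' → ¬(f j = f' j' ∧ f' j = f j' ∧ f j ≠ f' j)

/-- `Reconfigurable G f f'` means that finitely many feasible moves lead from `f` to `f'`. -/
abbrev Reconfigurable (G : SimpleGraph V) : (ι ↪ V) → (ι ↪ V) → Prop :=
  Relation.ReflTransGen (FeasibleMove G)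

theorem exists_feasibleMove_of_adj {w : V} (hadj : G.Adj (f j) w) (hw : w ∉ Set.range f) :
    ∃ f', FeasibleMove G f f' ∧ f' j = w ∧ ∀ k ≠ j, f' k = f k := by
  classical
  have hfw : ∀ k, f k ≠ w := fun k hk => hw ⟨k, hk⟩
  have hne : ∀ k ≠ j, f.setValue j w k = f k :=
    fun k hk => Function.Embedding.setValue_eq_of_ne hk (hfw k)
  refine ⟨f.setValue j w, ⟨fun k => ?_, ?_⟩, f.setValue_eq j w, hne⟩
  · obtain rfl | hk := eq_or_ne k j
    · exact .inr (by rwa [f.setValue_eq])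
    · exact .inl (hne k hk).symm
  · rintro k l - ⟨-, hkl, hk⟩
    obtain rfl : k = j := of_not_not fun hkj => hk (hne k hkj).symm
    exact hfw l (by rw [← hkl, f.setValue_eq])

theorem exists_reconfigurable_of_walk {x w : V} (p : G.Walk x w) (hx : f j = x)
    (hp : ∀ k, f k ∈ p.support → k = j) :
    ∃ f', Reconfigurable G f f' ∧ f' j = w ∧ ∀ k ≠ j, f' k = f k := by
  induction p generalizing f with
  | nil => exact ⟨f, .refl, hx, fun _ _ => rfl⟩
  | @cons x y w hxy q ih =>
    subst hx
    have hy : y ∉ Set.range f := by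
      rintro ⟨k, rfl⟩
      obtain rfl := hp k (by simp)
      exact hxy.ne rfl
    obtain ⟨f₁, hmove, hj₁, hne₁⟩ := exists_feasibleMove_of_adj hxy hy
    obtain ⟨f₂, hrec, hj₂, hne₂⟩ := ih hj₁ fun k hk => by
      by_contra hkj
      rw [hne₁ k hkj] at hk
      exact hkj (hp k (by simp [hk]))
    exact ⟨f₂, hrec.head hmove, hj₂, fun k hk => (hne₂ k hk).trans (hne₁ k hk)⟩

theorem eq_of_apply_mem_support {a : V} {p : G.Walk (f i) a}
    (hp : ∀ z ∈ p.support.tail, z ∉ Set.range f) {k : ι} (hk : f k ∈ p.support) : k = i :=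
  (p.mem_support_iff.1 hk).elim (fun h => f.injective h) fun h => absurd ⟨k, rfl⟩ (hp _ h)

theorem exists_reconfigurable_of_two_walks {a b v : V} (p : G.Walk (f i) a) (q : G.Walk (f i) b)
    (hp : ∀ z ∈ p.support.tail, z ∉ Set.range f) (hq : ∀ z ∈ q.support.tail, z ∉ Set.range f)
    (ha : a ∉ q.support) (hb : b ∉ p.support) (hv : G.Adj (f i) v) :
    ∃ f', Reconfigurable G f f' ∧ f' i = v := by
  by_cases hfree : v ∉ Set.range f
  · obtain ⟨f', hmove, hi, -⟩ := exists_feasibleMove_of_adj hv hfree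
    exact ⟨f', .single hmove, hi⟩
  obtain ⟨j, rfl⟩ := of_not_not hfree
  have hji : j ≠ i := by rintro rfl; exact hv.ne rfl
  obtain ⟨f₁, h₁, hi₁, hne₁⟩ :=
    exists_reconfigurable_of_walk p rfl fun _ => eq_of_apply_mem_support hp
  obtain ⟨f₂, h₂, hj₂, hne₂⟩ := exists_reconfigurable_of_walk (.cons hv.symm q) (hne₁ j hji)
    fun k hk => by
      by_contra hkj
      obtain rfl | hki := eq_or_ne k i
      · rw [hi₁, Walk.support_cons, List.mem_cons] at hk
        exact hk.elim (fun h => hji (eq_of_apply_mem_support hp (h ▸ p.end_mem_support))) ha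
      · rw [hne₁ k hki, Walk.support_cons, List.mem_cons, f.injective.eq_iff] at hk
        exact hk.elim hkj (hki ∘ eq_of_apply_mem_support hq)
  have hi₂ : f₂ i = a := (hne₂ i hji.symm).trans hi₁
  obtain ⟨f₃, h₃, hi₃, -⟩ := exists_reconfigurable_of_walk (p.reverse.concat hv) hi₂
    fun k hk => by
      by_contra hki
      rw [Walk.support_concat, Walk.support_reverse, List.mem_append, List.mem_reverse,
        List.mem_singleton] at hk
      obtain rfl | hkj := eq_or_ne k j
      · rw [hj₂] at hk
        exact hk.elim hb fun h => hji (eq_of_apply_mem_support hq (h ▸ q.end_mem_support))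
      · rw [hne₂ k hkj, hne₁ k hki, f.injective.eq_iff] at hk
        exact hk.elim (hki ∘ eq_of_apply_mem_support hp) hkj
  exact ⟨f₃, (h₁.trans h₂).trans h₃, hi₃⟩

/-- The vertices of `A` can be freed of agents by a reconfiguration that brings agent `i` back to
where it stands in `f`. -/
def Clearable (G : SimpleGraph V) (f : ι ↪ V) (i : ι) (A : Set V) : Prop :=
  ∃ f', Reconfigurable G f f' ∧ f' i = f i ∧ A ⊆ (Set.range f')ᶜ

namespace Clearable

variable {A B : Set V} {x y : V}

theorem of_subset_compl_range (h : A ⊆ (Set.range f)ᶜ) : Clearable G f i A :=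
  ⟨f, .refl, rfl, h⟩

theorem mono (h : Clearable G f i B) (hAB : A ⊆ B) : Clearable G f i A :=
  let ⟨f', hrec, hi, hB⟩ := h
  ⟨f', hrec, hi, hAB.trans hB⟩

theorem insert_of_adj (h : Clearable G f i (insert x A)) (hxA : x ∉ A)
    (hxy : (G.deleteIncidenceSet (f i)).Adj x y) : Clearable G f i (insert y A) := by
  obtain ⟨f₁, hrec, hi, hA⟩ := h
  obtain ⟨hx, hA⟩ := Set.insert_subset_iff.1 hA
  obtain ⟨hadj, -, hyi⟩ := deleteIncidenceSet_adj.1 hxy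
  by_cases hy : y ∉ Set.range f₁
  · exact ⟨f₁, hrec, hi, Set.insert_subset hy hA⟩
  obtain ⟨j, rfl⟩ := of_not_not hy
  have hij : i ≠ j := by rintro rfl; exact hyi hi
  obtain ⟨f₂, hmove, hj, hne⟩ := exists_feasibleMove_of_adj hadj.symm hx
  refine ⟨f₂, hrec.tail hmove, (hne i hij).trans hi, ?_⟩
  rintro z hz ⟨k, rfl⟩
  obtain rfl | hkj := eq_or_ne k j
  · rw [hj] at hz
    exact hz.elim hadj.ne hxA
  · rw [hne k hkj] at hz
    exact hz.elim (fun h => hkj (f₁.injective h)) fun hkA => hA hkA ⟨k, rfl⟩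

theorem insert_of_reachable (h : Clearable G f i (insert x A)) (hxA : x ∉ A)
    (hxy : (G.deleteIncidenceSet (f i)).Reachable x y) : Clearable G f i (insert y A) := by
  obtain ⟨p⟩ := hxy
  induction p generalizing A with
  | nil => exact h
  | @cons x z y hxz _ ih =>
    by_cases hzA : z ∈ A
    · -- `z` is to be cleared already: pass its vacancy on to `y` and refill it from `x`.
      obtain ⟨B, hzB, rfl⟩ : ∃ B, z ∉ B ∧ A = insert z B :=
        ⟨A \ {z}, by simp, by simp [Set.insert_eq_of_mem hzA]⟩
      rw [Set.mem_insert_iff, not_or] at hxA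
      obtain rfl | hxy := eq_or_ne x y
      · exact h
      rw [Set.insert_comm] at h ⊢
      have hyB := ih h (by simp [hzB, hxA.1, eq_comm])
      rw [Set.insert_comm] at hyB
      exact hyB.insert_of_adj (by simp [hxA.2, hxy]) hxz
    · exact ih (h.insert_of_adj hxA hxz) hzA

theorem of_card_le {A B : Finset V} {c : V} (h : Clearable G f i (A : Set V))
    (hcard : B.card ≤ A.card) (hA : ∀ x ∈ A, (G.deleteIncidenceSet (f i)).Reachable c x)
    (hB : ∀ x ∈ B, (G.deleteIncidenceSet (f i)).Reachable c x) :
    Clearable G f i (B : Set V) := by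
  classical
  induction hn : (B \ A).card generalizing A with
  | zero =>
    rw [Finset.card_eq_zero, Finset.sdiff_eq_empty_iff_subset] at hn
    exact h.mono (Finset.coe_subset.2 hn)
  | succ n ih =>
    obtain ⟨y, hy⟩ : (B \ A).Nonempty := Finset.card_pos.1 (by lia)
    obtain ⟨hyB, hyA⟩ := Finset.mem_sdiff.1 hy
    obtain ⟨x, hxA, hxB⟩ : ∃ x ∈ A, x ∉ B := by
      by_contra! hAB
      exact hyA (Finset.eq_of_subset_of_card_le hAB hcard ▸ hyB)
    refine ih (A := insert y (A.erase x)) ?_ ?_ ?_ ?_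
    · rw [← Finset.insert_erase hxA, Finset.coe_insert] at h
      rw [Finset.coe_insert]
      exact h.insert_of_reachable (by simp) ((hA x hxA).symm.trans (hB y hyB))
    · rwa [Finset.card_insert_of_notMem (by simp [hyA]), Finset.card_erase_add_one hxA]
    · exact Finset.forall_mem_insert _ _ _ |>.2
        ⟨hB y hyB, fun z hz => hA z (Finset.mem_of_mem_erase hz)⟩
    · have hdiff : B \ insert y (A.erase x) = (B \ A).erase y := by
        rw [Finset.sdiff_insert, ← Finset.sdiff_insert_of_notMem hxB, Finset.insert_erase hxA]
      rw [hdiff, Finset.card_erase_of_mem hy, hn, Nat.add_sub_cancel]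

end Clearable

theorem exists_reconfigurable_of_not_reachable {x y v : V} (hG : G.Preconnected)
    (hx : x ∉ Set.range f) (hy : y ∉ Set.range f)
    (hxy : ¬(G.deleteIncidenceSet (f i)).Reachable x y) (hv : G.Adj (f i) v) :
    ∃ f', Reconfigurable G f f' ∧ f' i = v := by
  obtain ⟨a, hia, hax⟩ := exists_adj_reachable_deleteIncidenceSet (hG (f i) x)
    (ne_of_mem_of_not_mem (Set.mem_range_self i) hx).symm
  obtain ⟨b, hib, hby⟩ := exists_adj_reachable_deleteIncidenceSet (hG (f i) y)
    (ne_of_mem_of_not_mem (Set.mem_range_self i) hy).symm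
  have hne_xy : x ≠ y := by rintro rfl; exact hxy .rfl
  have hne_ya : y ≠ a := by rintro rfl; exact hxy hax.symm
  have hne_ab : a ≠ b := by rintro rfl; exact hxy (hax.symm.trans hby)
  have hclear_xy : Clearable G f i {x, y} := .of_subset_compl_range (Set.pair_subset hx hy)
  have hclear_ya : Clearable G f i {y, a} := Set.pair_comm a y ▸
    hclear_xy.insert_of_reachable (by simpa using hne_xy) hax.symm
  obtain ⟨f₁, hrec₁, hi, hba⟩ := hclear_ya.insert_of_reachable (by simpa using hne_ya) hby.symm
  obtain ⟨hb, ha⟩ := Set.pair_subset_iff.1 hba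
  rw [← hi] at hia hib hv
  obtain ⟨f₂, hrec₂, hi₂⟩ := exists_reconfigurable_of_two_walks hia.toWalk hib.toWalk
    (by simpa using ha) (by simpa using hb) (by simp [hia.ne', hne_ab])
    (by simp [hib.ne', hne_ab.symm]) hv
  exact ⟨f₂, hrec₁.trans hrec₂, hi₂⟩

theorem exists_reconfigurable_of_forall_reachable {A : Finset V} {c v : V} (hG : G.Preconnected)
    (hdeg : ∀ w, (G.neighborSet w).encard ≠ 2) (hAf : (A : Set V) ⊆ (Set.range f)ᶜ)
    (hcard : 3 ≤ A.card) (hA : ∀ x ∈ A, (G.deleteIncidenceSet (f i)).Reachable c x)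
    (hv : G.Adj (f i) v) : ∃ f', Reconfigurable G f f' ∧ f' i = v := by
  classical
  obtain ⟨x, hx⟩ : A.Nonempty := Finset.card_pos.1 (by lia)
  obtain ⟨w, hiw, hwx⟩ := exists_adj_reachable_deleteIncidenceSet (hG (f i) x)
    (ne_of_mem_of_not_mem (Set.mem_range_self i) (hAf hx)).symm
  have hwA : ∀ y ∈ A, (G.deleteIncidenceSet (f i)).Reachable w y :=
    fun y hy => hwx.trans ((hA x hx).symm.trans (hA y hy))
  obtain ⟨y, hy, hyw⟩ := Finset.exists_mem_ne (by lia : 1 < A.card) w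
  obtain ⟨p⟩ := hwA y hy
  have hwa := p.adj_snd (Walk.not_nil_of_ne hyw.symm)
  generalize p.snd = a at hwa
  obtain ⟨hwa', hwi, hai⟩ := deleteIncidenceSet_adj.1 hwa
  obtain ⟨b, hwb', hbi, hba⟩ :=
    exists_adj_ne_of_encard_neighborSet_ne_two (hdeg w) hiw.symm hwa' hai.symm
  have hwb : (G.deleteIncidenceSet (f i)).Adj w b := deleteIncidenceSet_adj.2 ⟨hwb', hwi, hbi⟩
  have hclear : Clearable G f i (({w, a, b} : Finset V) : Set V) :=
    (Clearable.of_subset_compl_range hAf).of_card_le (Finset.card_le_three.trans hcard) hwA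
      (by simp [hwa.reachable, hwb.reachable])
  obtain ⟨f₁, hrec₁, hi, hwab⟩ := hclear
  obtain ⟨hw, ha, hb⟩ : w ∉ Set.range f₁ ∧ a ∉ Set.range f₁ ∧ b ∉ Set.range f₁ := by
    simpa [Set.insert_subset_iff] using hwab
  rw [← hi] at hiw hai hbi hv
  obtain ⟨f₂, hrec₂, hi₂⟩ := exists_reconfigurable_of_two_walks
    (.cons hiw hwa'.toWalk) (.cons hiw hwb'.toWalk)
    (by simp [-Set.mem_range, hw, ha]) (by simp [-Set.mem_range, hw, hb])
    (by simp [hai, hwa'.ne', hba.symm]) (by simp [hbi, hwb'.ne', hba]) hv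
  exact ⟨f₂, hrec₁.trans hrec₂, hi₂⟩

end Reconfiguration

theorem stmt14_general {V ι : Type*} {G : SimpleGraph V} (hG : G.Preconnected)
    (hdeg : ∀ w, (G.neighborSet w).encard ≠ 2) (f : ι ↪ V) (hfree : 3 ≤ (Set.range f)ᶜ.encard)
    {i : ι} {v : V} (hv : G.Adj (f i) v) :
    ∃ (S : ℕ) (s : ℕ → ι ↪ V),
      s 0 = f ∧ (∀ t < S, FeasibleMove G (s t) (s (t + 1))) ∧ s S i = v := by
  suffices h : ∃ f', Reconfigurable G f f' ∧ f' i = v by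
    obtain ⟨f', hrec, rfl⟩ := h
    obtain ⟨S, s, hs₀, hs, rfl⟩ := exists_seq_of_reflTransGen hrec
    exact ⟨S, s, hs₀, hs, rfl⟩
  by_cases hreach : ∀ x ∉ Set.range f, ∀ y ∉ Set.range f,
      (G.deleteIncidenceSet (f i)).Reachable x y
  · obtain ⟨A, hAf, hA⟩ := Set.exists_subset_encard_eq hfree
    lift A to Finset V using Set.finite_of_encard_eq_coe hA
    have hcard : A.card = 3 := by rw [Set.encard_coe_eq_coe_finsetCard] at hA; exact_mod_cast hA
    obtain ⟨c, hc⟩ : A.Nonempty := Finset.card_pos.1 (by lia)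
    exact exists_reconfigurable_of_forall_reachable hG hdeg hAf hcard.ge
      (fun x hx => hreach c (hAf hc) x (hAf hx)) hv
  · push Not at hreach
    obtain ⟨x, hx, y, hy, hxy⟩ := hreach
    exact exists_reconfigurable_of_not_reachable hG hx hy hxy hv

/-- in a tree on `n ≥ 4` vertices with no degree-2 vertex that is
not a star, if `n - 3` agents occupy pairwise distinct vertices, agent `i` sits
at `u`, and `uv` is an edge, then there is a finite sequence of feasible moves
(each agent stays or moves to an adjacent vertex, configurations stay injective,
no two agents swap along an edge) after which agent `i` occupies `v`. -/
theorem stmt14 {V : Type*} [Fintype V] (G : SimpleGraph V) [DecidableRel G.Adj]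
    (hG : G.IsTree) (hn : 4 ≤ Fintype.card V)
    (hdeg : ∀ w : V, G.degree w ≠ 2)
    (hnotstar : ¬ ∃ c : V, ∀ w : V, w ≠ c → G.Adj c w)
    (g : Fin (Fintype.card V - 3) → V) (hg : Function.Injective g)
    (i : Fin (Fintype.card V - 3)) (u v : V) (hgu : g i = u) (huv : G.Adj u v) :
    ∃ (S : ℕ) (f : ℕ → Fin (Fintype.card V - 3) → V),
      f 0 = g ∧
      (∀ t ≤ S, Function.Injective (f t)) ∧
      (∀ t < S, ∀ j, f t j = f (t + 1) j ∨ G.Adj (f t j) (f (t + 1) j)) ∧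
      (∀ t < S, ∀ j j', j ≠ j' →
        ¬(f t j = f (t + 1) j' ∧ f (t + 1) j = f t j' ∧ f t j ≠ f (t + 1) j)) ∧
      f S i = v := by
  have hfree : 3 ≤ (Set.range g)ᶜ.encard := by
    rw [encard_compl_range hg, Fintype.card_fin, Nat.sub_sub_self (by lia)]; rfl
  obtain ⟨S, f, hf₀, hf, hS⟩ := stmt14_general hG.connected.preconnected
    (fun w => by rw [encard_neighborSet_eq_degree]; exact_mod_cast hdeg w) ⟨g, hg⟩ hfree
    (hgu ▸ huv)
  exact ⟨S, fun t => f t, congrArg _ hf₀, fun t _ => (f t).injective,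
    fun t ht => (hf t ht).stay_or_adj, fun t ht => (hf t ht).not_swap, hS⟩
end

section
/- Let G be a tree on n ≥ 2 vertices. Then the maximum integer k such that G admits a feasible agency with k agents and some time horizon T equals the minimum of those of the following three quantities whose defining stretch exists: n − stretch_YY(G) − 1, n − stretch_LY(G), and n − stretch_LL(G) + 1. -/
open SimpleGraph

/-- A Y–Y-path: a path both of whose endpoints are joints (degree ≥ 3) and all of
whose interior vertices have degree 2. -/
def IsYYPath {V : Type*} [Fintype V] (G : SimpleGraph V) [DecidableRel G.Adj]
    {x y : V} (p : G.Walk x y) : Prop :=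
  p.IsPath ∧ 3 ≤ G.degree x ∧ 3 ≤ G.degree y ∧
    ∀ w ∈ p.support, w ≠ x → w ≠ y → G.degree w = 2

/-- An L–Y-path: a path whose endpoints are a leaf (degree 1) and a joint
(degree ≥ 3) and all of whose interior vertices have degree 2. -/
def IsLYPath {V : Type*} [Fintype V] (G : SimpleGraph V) [DecidableRel G.Adj]
    {x y : V} (p : G.Walk x y) : Prop :=
  p.IsPath ∧ G.degree x = 1 ∧ 3 ≤ G.degree y ∧
    ∀ w ∈ p.support, w ≠ x → w ≠ y → G.degree w = 2

/-!
Upper bound. A Y–Y-path, an L–Y-path or a Hamiltonian path is a corridor that only joins two rooms,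
the parts of the tree with `m` and `m'` vertices behind its two ends. If there are at least
`max 1 m + max 1 m'` agents, separate the `max 1 m` lowest of them from the others. The lower agents
stay below the upper ones: two agents cannot pass each other inside the corridor, and nobody can
enter a room that is full. Hence the lower agents never visit the upper end.

Lower bound. If there is a joint and the agents are as few as the stretches require, any agent can
be moved to an adjacent vertex `u`, even if `u` is occupied and no vertex behind `u` is vacant. If
all vacant vertices lie in one branch, they suffice to clear the path to its closest joint together
with two neighbours of that joint, where the two agents change their order; otherwise they do so
in two branches with a vacant vertex each. Thus any agent can be moved to any vertex by moves
of one agent at a time. As such moves are reversible, they can be concatenated to a closed schedule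
in which every agent visits every vertex.
-/

/-! ### Distances and branches in a tree -/

section Tree

variable {V : Type*} {G : SimpleGraph V} {r u v w x y z a b : V}

lemma length_eq_dist_of_isPath (hG : G.IsTree) {p : G.Walk x y} (hp : p.IsPath) :
    p.length = G.dist x y := by
  obtain ⟨q, hq, hlen⟩ := hG.connected.exists_path_of_dist x y
  rw [(hG.existsUnique_path x y).unique hp hq, hlen]

lemma card_support_erase [DecidableEq V] {p : G.Walk x y} (hp : p.IsPath) :
    (p.support.toFinset.erase x).card = p.length := by
  rw [Finset.card_erase_of_mem (by simp), List.toFinset_card_of_nodup hp.support_nodup,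
    Walk.length_support, Nat.add_sub_cancel]

lemma dist_getVert_of_isPath (hG : G.IsTree) {p : G.Walk x y} (hp : p.IsPath) {i : ℕ}
    (hi : i ≤ p.length) : G.dist x (p.getVert i) = i := by
  rw [← length_eq_dist_of_isPath hG (hp.take i), Walk.take_length, min_eq_left hi]

lemma dist_add_dist_of_mem_support (hG : G.IsTree) {p : G.Walk x y} (hp : p.IsPath)
    (hv : v ∈ p.support) : G.dist x v + G.dist v y = G.dist x y := by
  classical
  rw [← length_eq_dist_of_isPath hG hp, ← length_eq_dist_of_isPath hG (hp.takeUntil hv),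
    ← length_eq_dist_of_isPath hG (hp.dropUntil hv), ← Walk.length_append, Walk.take_spec]

lemma exists_parent (hG : G.Connected) (hv : v ≠ r) :
    ∃ u, G.Adj u v ∧ G.dist r v = G.dist r u + 1 := by
  obtain ⟨p, hp⟩ := hG.exists_walk_length_eq_dist v r
  cases p with
  | nil => exact absurd rfl hv
  | cons hvu q =>
    refine ⟨_, hvu.symm, le_antisymm ?_ ?_⟩
    · exact (hG.dist_triangle (v := _)).trans_eq (by rw [dist_eq_one_iff_adj.2 hvu.symm])
    · rw [SimpleGraph.dist_comm (v := v), ← hp, Walk.length_cons, SimpleGraph.dist_comm]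
      exact Nat.succ_le_succ (dist_le q)

lemma parent_unique (hG : G.IsTree) (hu : G.Adj u v) (hw : G.Adj w v)
    (hdu : G.dist r v = G.dist r u + 1) (hdw : G.dist r v = G.dist r w + 1) : u = w := by
  have key : ∀ {u}, G.Adj u v → G.dist r v = G.dist r u + 1 →
      ∃ p : G.Walk v r, p.IsPath ∧ p.snd = u := fun {u} hu hdu ↦ by
    obtain ⟨p, hp⟩ := hG.connected.exists_walk_length_eq_dist u r
    refine ⟨.cons hu.symm p, Walk.isPath_of_length_eq_dist _ ?_, by simp⟩
    rw [Walk.length_cons, hp, SimpleGraph.dist_comm, ← hdu, SimpleGraph.dist_comm]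
  obtain ⟨p, hp, rfl⟩ := key hu hdu
  obtain ⟨q, hq, rfl⟩ := key hw hdw
  rw [(hG.existsUnique_path v r).unique hp hq]

/-- The branch of a tree at `w` towards its neighbour `a`: the vertices that the edge `wa`
separates from `w`, described by distances. -/
def branch (G : SimpleGraph V) (w a : V) : Set V := {v | G.dist w v = G.dist a v + 1}

lemma mem_branch_self (hwa : G.Adj w a) : a ∈ branch G w a := by
  simp [branch, dist_eq_one_iff_adj.2 hwa]

lemma notMem_branch : w ∉ branch G w a := by simp [branch]

lemma exists_mem_branch (hG : G.Connected) (hv : v ≠ w) :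
    ∃ a, G.Adj w a ∧ v ∈ branch G w a := by
  obtain ⟨a, ha, hd⟩ := exists_parent hG hv.symm
  exact ⟨a, ha.symm, by rwa [SimpleGraph.dist_comm, SimpleGraph.dist_comm (v := a)] at hd⟩

lemma branch_unique (hG : G.IsTree) (ha : G.Adj w a) (hb : G.Adj w b)
    (hva : v ∈ branch G w a) (hvb : v ∈ branch G w b) : a = b := by
  refine parent_unique hG (r := v) ha.symm hb.symm ?_ ?_ <;>
    rw [SimpleGraph.dist_comm, SimpleGraph.dist_comm (u := v)] <;> assumption

lemma eq_of_mem_branch_of_adj (hG : G.Connected) (hv : v ∈ branch G w a) (hwv : G.Adj w v) :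
    v = a := by
  have hd : G.dist w v = G.dist a v + 1 := hv
  rw [dist_eq_one_iff_adj.2 hwv] at hd
  exact (hG.dist_eq_zero_iff.1 (by omega)).symm

lemma mem_branch_of_dist_eq (hG : G.IsTree) (hwa : G.Adj w a) (hv : v ∈ branch G w a)
    (hvu : G.Adj v u) (hd : G.dist w u = G.dist w v + 1) : u ∈ branch G w a := by
  have hv : G.dist w v = G.dist a v + 1 := hv
  have hau := hG.dist_eq_dist_add_one_of_adj a hvu
  have hwu := hG.dist_eq_dist_add_one_of_adj u hwa
  simp only [SimpleGraph.dist_comm (u := u)] at hwu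
  change G.dist w u = G.dist a u + 1
  omega

lemma mem_branch_of_adj (hG : G.IsTree) (hwa : G.Adj w a) (hv : v ∈ branch G w a)
    (hvu : G.Adj v u) (huw : u ≠ w) : u ∈ branch G w a := by
  obtain hd | hd := hG.dist_eq_dist_add_one_of_adj w hvu
  · obtain ⟨b, hwb, hu⟩ := exists_mem_branch hG.connected huw
    have hvb := mem_branch_of_dist_eq hG hwb hu hvu.symm hd
    rwa [branch_unique hG hwa hwb hv hvb]
  · exact mem_branch_of_dist_eq hG hwa hv hvu hd

lemma mem_support_of_mem_branch (hG : G.IsTree) (hwa : G.Adj w a) (p : G.Walk v z)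
    (hv : v ∈ branch G w a) (hz : z ∉ branch G w a) : w ∈ p.support := by
  induction p with
  | nil => exact absurd hv hz
  | @cons v u z hvu q ih =>
    by_cases huw : u = w
    · simp [← huw]
    · exact List.mem_cons_of_mem _ (ih (mem_branch_of_adj hG hwa hv hvu huw) hz)

lemma dist_eq_of_mem_branch (hG : G.IsTree) (hwa : G.Adj w a) (hv : v ∈ branch G w a)
    (hz : z ∉ branch G w a) : G.dist v z = G.dist v w + G.dist w z := by
  obtain ⟨p, hp, -⟩ := hG.connected.exists_path_of_dist v z
  exact (dist_add_dist_of_mem_support hG hp (mem_support_of_mem_branch hG hwa p hv hz)).symm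

lemma getVert_mem_branch_snd (hG : G.IsTree) {p : G.Walk x y} (hp : p.IsPath) {i : ℕ}
    (hi₀ : i ≠ 0) (hi : i ≤ p.length) : p.getVert i ∈ branch G x p.snd := by
  cases p with
  | nil => simp_all
  | cons h q =>
    obtain ⟨i, rfl⟩ := Nat.exists_eq_succ_of_ne_zero hi₀
    rw [Walk.length_cons] at hi
    change G.dist x _ = G.dist _ _ + 1
    rw [dist_getVert_of_isPath hG hp (by simpa using hi), Walk.getVert_cons_succ, Walk.snd_cons,
      dist_getVert_of_isPath hG hp.of_cons (by omega)]

lemma mem_branch_snd (hG : G.IsTree) {p : G.Walk x y} (hp : p.IsPath) (hv : v ∈ p.support)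
    (hvx : v ≠ x) : v ∈ branch G x p.snd := by
  obtain ⟨i, rfl, hi⟩ := Walk.mem_support_iff_exists_getVert.1 hv
  refine getVert_mem_branch_snd hG hp ?_ hi
  rintro rfl
  exact hvx p.getVert_zero

lemma snd_eq_of_mem_branch (hG : G.IsTree) (hwa : G.Adj w a) (hz : z ∈ branch G w a)
    {p : G.Walk w z} (hp : p.IsPath) : p.snd = a := by
  have hzw : z ≠ w := ne_of_mem_of_not_mem hz notMem_branch
  exact branch_unique hG (p.adj_snd fun h ↦ hzw h.eq.symm) hwa
    (mem_branch_snd hG hp p.end_mem_support hzw) hz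

lemma mem_branch_of_isPath (hG : G.IsTree) (hwa : G.Adj w a) (hz : z ∈ branch G w a)
    {p : G.Walk w z} (hp : p.IsPath) (hv : v ∈ p.support) (hvw : v ≠ w) : v ∈ branch G w a := by
  rw [← snd_eq_of_mem_branch hG hwa hz hp]
  exact mem_branch_snd hG hp hv hvw

lemma reachable_induce_branch (hG : G.IsTree) (hwa : G.Adj w a) (hz : z ∈ branch G w a) :
    (G.induce (branch G w a)).Reachable ⟨a, mem_branch_self hwa⟩ ⟨z, hz⟩ := by
  obtain ⟨p, hp, -⟩ := hG.connected.exists_path_of_dist w z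
  have hsnd := snd_eq_of_mem_branch hG hwa hz hp
  cases p with
  | nil => exact absurd hz notMem_branch
  | cons h q =>
    obtain rfl : _ = a := (Walk.snd_cons q h).symm.trans hsnd
    refine ⟨q.induce _ fun v hv ↦ mem_branch_of_isPath hG hwa hz hp ?_ ?_⟩
    · exact List.mem_cons_of_mem _ hv
    · rintro rfl
      exact ((Walk.cons_isPath_iff h q).1 hp).2 hv

lemma reachable_spanningCoe_induce_branch (hG : G.IsTree) (hwa : G.Adj w a)
    (hx : x ∈ branch G w a) (hy : y ∈ branch G w a) :
    (G.induce (branch G w a)).spanningCoe.Reachable x y :=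
  ((reachable_induce_branch hG hwa hx).symm.trans (reachable_induce_branch hG hwa hy)).map
    (Embedding.spanningCoe _).toHom

end Tree

section Children

variable {V : Type*} [Fintype V] {G : SimpleGraph V} [DecidableRel G.Adj] {r v : V}

/-- The children of `v` in the tree `G` rooted at `r`: the neighbours farther from `r`. -/
noncomputable def children (G : SimpleGraph V) [DecidableRel G.Adj] (r v : V) : Finset V :=
  {u ∈ G.neighborFinset v | G.dist r u = G.dist r v + 1}

lemma mem_children {u : V} :
    u ∈ children G r v ↔ G.Adj v u ∧ G.dist r u = G.dist r v + 1 := by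
  simp [children]

lemma children_self : children G r r = G.neighborFinset r := by
  ext u
  simp +contextual [mem_children, dist_eq_one_iff_adj]

lemma card_children_add_one (hG : G.IsTree) (hv : v ≠ r) :
    (children G r v).card + 1 = G.degree v := by
  classical
  obtain ⟨u, huv, hu⟩ := exists_parent hG.connected hv
  have hu_notMem : u ∉ children G r v := fun h ↦ by
    have := (mem_children.1 h).2
    omega
  rw [← card_neighborFinset_eq_degree, ← Finset.card_insert_of_notMem hu_notMem]
  congr 1
  ext w
  rw [Finset.mem_insert, mem_children, mem_neighborFinset]
  constructor
  · rintro (rfl | h)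
    exacts [huv.symm, h.1]
  · intro hvw
    obtain hd | hd := hG.dist_eq_dist_add_one_of_adj r hvw
    · exact .inl (parent_unique hG hvw.symm huv hd hu)
    · exact .inr ⟨hvw, hd⟩

lemma degree_le_card_children_add_one (hG : G.IsTree) :
    G.degree v ≤ (children G r v).card + 1 := by
  obtain rfl | hv := eq_or_ne v r
  · simp [children_self]
  · exact (card_children_add_one hG hv).ge

end Children

/-! ### Bare paths -/

section Bare

variable {V : Type*} [Fintype V] {G : SimpleGraph V} [DecidableRel G.Adj] {v x y : V}
  {p : G.Walk x y}

/-- A bare path: a path all of whose interior vertices have degree 2. Y–Y-paths and L–Y-paths are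
the bare paths with prescribed degrees at their endpoints. -/
structure IsBare (G : SimpleGraph V) [DecidableRel G.Adj] {x y : V} (p : G.Walk x y) : Prop where
  isPath : p.IsPath
  degree_eq_two : ∀ w ∈ p.support, w ≠ x → w ≠ y → G.degree w = 2

lemma IsYYPath.isBare (hp : IsYYPath G p) : IsBare G p := ⟨hp.1, hp.2.2.2⟩

lemma IsLYPath.isBare (hp : IsLYPath G p) : IsBare G p := ⟨hp.1, hp.2.2.2⟩

namespace IsBare

lemma card_children_getVert (hG : G.IsTree) (hp : IsBare G p) {i : ℕ} (hi₀ : i ≠ 0)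
    (hi : i < p.length) : (children G x (p.getVert i)).card = 1 := by
  have hdist := dist_getVert_of_isPath hG hp.isPath hi.le
  have hy : G.dist x y = p.length := (length_eq_dist_of_isPath hG hp.isPath).symm
  have hne_x : p.getVert i ≠ x := fun h ↦ hi₀ (by rw [← hdist, h, dist_self])
  have hne_y : p.getVert i ≠ y := fun h ↦ hi.ne (by rw [← hdist, h, hy])
  have := card_children_add_one hG hne_x
  rw [hp.degree_eq_two _ (p.getVert_mem_support i) hne_x hne_y] at this
  omega

lemma eq_getVert_of_mem_branch (hG : G.IsTree) (hp : IsBare G p) (hv : v ∈ branch G x p.snd)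
    (hd : G.dist x v ≤ p.length) : v = p.getVert (G.dist x v) := by
  induction hn : G.dist x v generalizing v with
  | zero =>
    obtain rfl := hG.connected.dist_eq_zero_iff.1 hn
    exact absurd hv notMem_branch
  | succ n ih =>
    have hnil : ¬ p.Nil := by
      rw [← Walk.length_eq_zero_iff]
      omega
    have hvx : v ≠ x := fun h ↦ by simp [h] at hn
    obtain ⟨u, huv, hu⟩ := exists_parent hG.connected hvx
    obtain rfl | hux := eq_or_ne u x
    · obtain rfl : n = 0 := by simpa [hn] using hu
      exact eq_of_mem_branch_of_adj hG.connected hv huv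
    · have hun : G.dist x u = n := by omega
      obtain rfl := ih (mem_branch_of_adj hG (p.adj_snd hnil) hv huv.symm hux) (by omega) hun
      have hn₀ : n ≠ 0 := by
        rintro rfl
        exact hux p.getVert_zero
      refine Finset.card_le_one.1 (hp.card_children_getVert hG hn₀ (by omega)).le _ ?_ _ ?_
      · exact mem_children.2 ⟨huv, hu⟩
      · exact mem_children.2 ⟨p.adj_getVert_succ (by omega), by
          rw [dist_getVert_of_isPath hG hp.isPath (by omega), hun]⟩

lemma mem_support_of_mem_branch (hG : G.IsTree) (hp : IsBare G p) (hv : v ∈ branch G x p.snd)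
    (hd : G.dist x v ≤ p.length) : v ∈ p.support := by
  rw [hp.eq_getVert_of_mem_branch hG hv hd]
  exact p.getVert_mem_support _

end IsBare

/-- An inner vertex of a path has a parent and a child, hence degree at least 2. -/
lemma two_le_degree_of_mem_support (hG : G.IsTree) (hp : p.IsPath) (hv : v ∈ p.support)
    (hvx : v ≠ x) (hvy : v ≠ y) : 2 ≤ G.degree v := by
  obtain ⟨i, rfl, hi⟩ := Walk.mem_support_iff_exists_getVert.1 hv
  have hi : i < p.length := lt_of_le_of_ne hi fun h ↦ hvy (by rw [h, p.getVert_length])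
  have hchild : p.getVert (i + 1) ∈ children G x (p.getVert i) := mem_children.2
    ⟨p.adj_getVert_succ hi, by
      rw [dist_getVert_of_isPath hG hp hi, dist_getVert_of_isPath hG hp hi.le]⟩
  have := Finset.card_pos.2 ⟨_, hchild⟩
  have := card_children_add_one hG hvx
  omega

lemma isBare_of_degree_le_two (hG : G.IsTree) (hp : p.IsPath)
    (hdeg : ∀ v ∈ p.support, v ≠ x → v ≠ y → G.degree v ≤ 2) : IsBare G p where
  isPath := hp
  degree_eq_two v hv hvx hvy :=
    (hdeg v hv hvx hvy).antisymm (two_le_degree_of_mem_support hG hp hv hvx hvy)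

lemma exists_adj_of_two_le_degree (hv : 2 ≤ G.degree v) (a : V) : ∃ b, G.Adj v b ∧ b ≠ a := by
  obtain ⟨b, hb, hba⟩ := Finset.exists_mem_ne (by rwa [G.card_neighborFinset_eq_degree v]) a
  exact ⟨b, by simpa using hb, hba⟩

lemma mem_branch_of_degree_eq_one (hG : G.IsTree) {a : V} (hx : G.degree x = 1)
    (ha : G.Adj x a) (hv : v ≠ x) : v ∈ branch G x a := by
  obtain ⟨b, hb, hvb⟩ := exists_mem_branch hG.connected hv
  rw [← card_neighborFinset_eq_degree] at hx
  rwa [Finset.card_le_one.1 hx.le a (by simpa) b (by simpa)]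

lemma exists_joint_or_hamiltonian_path (hG : G.IsTree) [Nontrivial V] :
    (∃ x, 3 ≤ G.degree x) ∨ ∃ (x y : V) (p : G.Walk x y), p.IsPath ∧ ∀ w, w ∈ p.support := by
  refine or_iff_not_imp_left.2 fun hdeg ↦ ?_
  push Not at hdeg
  obtain ⟨x, hx⟩ := hG.exists_vert_degree_one_of_nontrivial
  obtain ⟨y, -, hy⟩ := Finset.univ.exists_max_image (G.dist x) Finset.univ_nonempty
  obtain ⟨p, hp, hlen⟩ := hG.connected.exists_path_of_dist x y
  refine ⟨x, y, p, hp, fun w ↦ ?_⟩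
  obtain rfl | hwx := eq_or_ne w x
  · exact p.start_mem_support
  have hwy := hy w (Finset.mem_univ _)
  have hnil : ¬ p.Nil := by
    rw [← Walk.length_eq_zero_iff]
    have := hG.connected.pos_dist_of_ne hwx.symm
    omega
  have hbare := isBare_of_degree_le_two hG hp fun v _ _ _ ↦ Nat.le_of_lt_succ (hdeg v)
  exact hbare.mem_support_of_mem_branch hG
    (mem_branch_of_degree_eq_one hG hx (p.adj_snd hnil) hwx) (hlen ▸ hwy)

end Bare

/-! ### The order of the agents along a levelling -/

section CrashFreeStep

variable {V ι : Type*} {G : SimpleGraph V} {c c' : ι → V}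

/-- A simultaneous move of all agents, from the configuration `c` to `c'`, during which no two
agents crash. -/
structure CrashFreeStep (G : SimpleGraph V) (c c' : ι → V) : Prop where
  injective : Function.Injective c
  injective' : Function.Injective c'
  eq_or_adj : ∀ i, c i = c' i ∨ G.Adj (c i) (c' i)
  not_swap : ∀ i j, i ≠ j → ¬(c i = c' j ∧ c' i = c j)

lemma FeasibleAgency.injective {k T t : ℕ} {a : Fin k → ℕ → V} (ha : FeasibleAgency G k T a)
    (ht : t ≤ T) : Function.Injective (a · t) := fun i j hij ↦ by
  by_contra hne
  exact (ha.2 i j hne).1 t ht hij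

lemma FeasibleAgency.crashFreeStep {k T t : ℕ} {a : Fin k → ℕ → V}
    (ha : FeasibleAgency G k T a) (ht : t < T) : CrashFreeStep G (a · t) (a · (t + 1)) where
  injective := ha.injective ht.le
  injective' := ha.injective ht
  eq_or_adj i := (ha.1 i).1 t ht
  not_swap i j hij h :=
    (ha.2 i j hij).2 t ht ⟨h.1, h.2, fun h' ↦ hij (ha.injective ht (h'.symm.trans h.1))⟩

/-- If an agent entered a full set `C` through its only exit `v`, it would displace an agent further
away from `v`, which would displace another one, and so on forever. -/
lemma CrashFreeStep.notMem_of_subset_range [Finite V] (hG : G.IsTree) (h : CrashFreeStep G c c')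
    {C : Set V} {b : ι} (hb : c b ∉ C) (hC : ∀ u ∈ C, ∀ w ∉ C, G.Adj u w → w = c b)
    (hfull : C ⊆ Set.range c) : c' b ∉ C := by
  intro hb'
  have : Finite ι := Finite.of_injective c h.injective
  let pushed : Set ι := {i | c' i ∈ C ∧ G.Adj (c i) (c' i) ∧
    G.dist (c b) (c' i) = G.dist (c b) (c i) + 1}
  have hb_pushed : b ∈ pushed := by
    have hadj := (h.eq_or_adj b).resolve_left fun h' ↦ hb (h' ▸ hb')
    exact ⟨hb', hadj, by rw [dist_self, dist_eq_one_iff_adj.2 hadj]⟩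
  obtain ⟨i, ⟨hiC, hi_adj, hi_dist⟩, hi_max⟩ :=
    Set.exists_max_image pushed (fun i ↦ G.dist (c b) (c i)) pushed.toFinite ⟨b, hb_pushed⟩
  obtain ⟨j, hj⟩ := hfull hiC
  have hji : j ≠ i := by
    rintro rfl
    exact hi_adj.ne hj
  have hj_adj : G.Adj (c j) (c' j) :=
    (h.eq_or_adj j).resolve_left fun h' ↦ hji (h.injective' (h'.symm.trans hj))
  have hj_dist : G.dist (c b) (c' j) = G.dist (c b) (c j) + 1 := by
    refine (hG.dist_eq_dist_add_one_of_adj (c b) hj_adj).resolve_left fun hd ↦ ?_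
    refine h.not_swap j i hji ⟨hj, ?_⟩
    exact parent_unique hG hj_adj.symm (hj ▸ hi_adj) hd (hj ▸ hi_dist)
  have hjC : c' j ∈ C := by
    by_contra hjC
    rw [hC _ (hj ▸ hiC) _ hjC hj_adj, dist_self] at hj_dist
    omega
  have := hi_max j ⟨hjC, hj_adj, hj_dist⟩
  rw [hj, hi_dist] at this
  omega

end CrashFreeStep

section Levelling

open scoped Finset

variable {V ι : Type*} {G : SimpleGraph V} {f : V → ℕ} {s : ℕ} {c c' : ι → V} {S : Finset ι}

/-- A levelling: a map to `{0, …, s + 1}` that changes by at most one along every edge and takes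
every value of `{1, …, s}` at most once. The levels `0` and `s + 1` are the two rooms at the ends of
a corridor. -/
structure IsLevelling (G : SimpleGraph V) (f : V → ℕ) (s : ℕ) : Prop where
  le_add_one : ∀ ⦃u v⦄, G.Adj u v → f u ≤ f v + 1
  le : ∀ v, f v ≤ s + 1
  injOn : ∀ ⦃u v⦄, f u = f v → 1 ≤ f u → f u ≤ s → u = v

namespace IsLevelling

lemma reflect (hf : IsLevelling G f s) : IsLevelling G (fun v ↦ s + 1 - f v) s where
  le_add_one u v huv := by
    have := hf.le_add_one huv.symm
    omega
  le v := Nat.sub_le _ _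
  injOn u v huv h₁ h₂ := by
    have := hf.le u
    have := hf.le v
    exact hf.injOn (by omega) (by omega) (by omega)

lemma le_add_one_of_step (hf : IsLevelling G f s) (h : CrashFreeStep G c c') (i : ι) :
    f (c i) ≤ f (c' i) + 1 ∧ f (c' i) ≤ f (c i) + 1 := by
  obtain h | h := h.eq_or_adj i
  · simp [h]
  · exact ⟨hf.le_add_one h, hf.le_add_one h.symm⟩

end IsLevelling

lemma exists_finset_card_eq_of_le [Fintype ι] (g : ι → ℕ) {m : ℕ} (hm : m ≤ Fintype.card ι) :
    ∃ S : Finset ι, #S = m ∧ ∀ i ∈ S, ∀ j ∉ S, g i ≤ g j := by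
  classical
  induction m with
  | zero => exact ⟨∅, by simp⟩
  | succ m ih =>
    obtain ⟨S, hS, hle⟩ := ih (by omega)
    have hne : Sᶜ.Nonempty := by
      rw [← Finset.card_pos, Finset.card_compl]
      omega
    obtain ⟨z, hz, hmin⟩ := Sᶜ.exists_min_image g hne
    rw [Finset.mem_compl] at hz
    refine ⟨insert z S, by rw [Finset.card_insert_of_notMem hz, hS], fun i hi j hj ↦ ?_⟩
    rw [Finset.mem_insert, not_or] at hj
    obtain rfl | hi := Finset.mem_insert.1 hi
    · exact hmin j (Finset.mem_compl.2 hj.2)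
    · exact hle i hi j hj.2

variable [Fintype V]

lemma subset_range_of_card_le {P : V → Prop} [DecidablePred P] (hc : Function.Injective c)
    (hS : ∀ i ∈ S, P (c i)) (hcard : #{v | P v} ≤ #S) :
    {v | P v} ⊆ Set.range c := fun v hv ↦ by
  obtain ⟨i, -, hi⟩ := Finset.surjOn_of_injOn_of_card_le c
    (fun i hi ↦ by simpa using hS i hi) hc.injOn hcard (show v ∈ _ by simpa using hv)
  exact ⟨i, hi⟩

/-- If the room at level `0` cannot hold more than the agents of `S`, any agent after them stands
above it. -/
lemma pos_of_card_le (hc : Function.Injective c) (hS : #{v | f v = 0} ≤ #S) {j : ι} (hj : j ∉ S)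
    (hle : ∀ i ∈ S, f (c i) ≤ f (c j)) : 0 < f (c j) := by
  classical
  by_contra! hj₀
  have := Finset.card_le_card_of_injOn (s := insert j S) (t := {v | f v = 0}) c
    (fun i hi ↦ by
      obtain rfl | hi := Finset.mem_insert.1 hi
      · simpa using hj₀
      · simpa using (hle i hi).trans hj₀) hc.injOn
  rw [Finset.card_insert_of_notMem hj] at this
  omega

namespace IsLevelling

lemma filter_reflect_eq_zero (hf : IsLevelling G f s) :
    ({v | s + 1 - f v = 0} : Finset V) = ({v | f v = s + 1} : Finset V) := by
  ext v
  have := hf.le v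
  simp only [Finset.mem_filter, Finset.mem_univ, true_and]
  omega

/-- The agents of `S` fill the room at level `0`, so no other agent can enter it. -/
lemma pos_of_step (hG : G.IsTree) (hf : IsLevelling G f s) (hs : 0 < s)
    (h : CrashFreeStep G c c') (hS : #{v | f v = 0} ≤ #S)
    (hlt : ∀ i ∈ S, ∀ j ∉ S, f (c i) < f (c j)) {j : ι} (hj : j ∉ S) : 0 < f (c' j) := by
  have hj₀ := pos_of_card_le h.injective hS hj fun i hi ↦ (hlt i hi j hj).le
  by_contra! hj₀'
  have hj₁ : f (c j) = 1 := by
    have := hf.le_add_one_of_step h j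
    omega
  refine h.notMem_of_subset_range hG (C := {v | f v = 0}) hj₀.ne' (fun u hu w hw huw ↦ ?_) ?_
    (Nat.le_zero.1 hj₀')
  · have hw₁ := hf.le_add_one huw.symm
    have hu : f u = 0 := hu
    have hw : f w ≠ 0 := hw
    exact hf.injOn (by omega) (by omega) (by omega)
  · refine subset_range_of_card_le h.injective (fun i hi ↦ ?_) hS
    have := hlt i hi j hj
    omega

variable [Fintype ι] [DecidableEq ι]

lemma lt_of_le (hf : IsLevelling G f s) (hc : Function.Injective c)
    (hS : #{v | f v = 0} ≤ #S) (hSc : #{v | f v = s + 1} ≤ #Sᶜ)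
    (hle : ∀ i ∈ S, ∀ j ∉ S, f (c i) ≤ f (c j)) : ∀ i ∈ S, ∀ j ∉ S, f (c i) < f (c j) := by
  intro i hi j hj
  have hj₀ := pos_of_card_le hc hS hj fun i hi ↦ hle i hi j hj
  have hi₀ := pos_of_card_le (f := fun v ↦ s + 1 - f v) (j := i) hc
    (hf.filter_reflect_eq_zero.symm ▸ hSc) (by simpa using hi) fun j hj ↦ by
      have := hle i hi j (Finset.mem_compl.1 hj)
      omega
  refine (hle i hi j hj).lt_of_ne fun heq ↦ hj ?_
  rwa [← hc (hf.injOn heq (by omega) (by omega))]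

lemma le_of_step (hG : G.IsTree) (hf : IsLevelling G f s) (hs : 0 < s)
    (h : CrashFreeStep G c c') (hS : #{v | f v = 0} ≤ #S)
    (hSc : #{v | f v = s + 1} ≤ #Sᶜ)
    (hlt : ∀ i ∈ S, ∀ j ∉ S, f (c i) < f (c j)) : ∀ i ∈ S, ∀ j ∉ S, f (c' i) ≤ f (c' j) := by
  intro i hi j hj
  have hij := hlt i hi j hj
  have hi_step := hf.le_add_one_of_step h i
  have hj_step := hf.le_add_one_of_step h j
  have hj₀ := hf.pos_of_step hG hs h hS hlt hj
  have hi₀ := hf.reflect.pos_of_step hG hs h (S := Sᶜ) (j := i)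
    (hf.filter_reflect_eq_zero.symm ▸ hSc) (fun j hj i hi ↦ by
      have := hlt i (by simpa using hi) j (by simpa using hj)
      have := hf.le (c j)
      omega) (by simpa using hi)
  by_contra! hgt
  refine h.not_swap i j (fun hij ↦ hj (hij ▸ hi)) ⟨?_, ?_⟩
  · exact hf.injOn (by omega) (by omega) (by omega)
  · exact hf.injOn (by omega) (by omega) (by omega)

end IsLevelling

/-- The lowest agents stay below the others forever, so they never get to the top level. -/
lemma FeasibleAgency.lt_of_isLevelling (hG : G.IsTree) (hf : IsLevelling G f s) (hs : 0 < s)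
    {k T : ℕ} {a : Fin k → ℕ → V} (ha : FeasibleAgency G k T a) :
    k < max 1 #{v | f v = 0} + max 1 #{v | f v = s + 1} := by
  by_contra! hk
  obtain ⟨S, hcard, hle⟩ := exists_finset_card_eq_of_le (fun i ↦ f (a i 0))
    (m := max 1 #{v | f v = 0}) (by rw [Fintype.card_fin]; omega)
  have hcard_compl : #Sᶜ = k - #S := by rw [Finset.card_compl, Fintype.card_fin]
  have hlt : ∀ t ≤ T, ∀ i ∈ S, ∀ j ∉ S, f (a i t) < f (a j t) := by
    intro t
    induction t with
    | zero =>
      intro _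
      exact hf.lt_of_le (ha.injective (Nat.zero_le T)) (by omega) (by omega) hle
    | succ t ih =>
      intro ht
      exact hf.lt_of_le (ha.injective ht) (by omega) (by omega) <|
        hf.le_of_step hG hs (ha.crashFreeStep ht) (by omega) (by omega) (ih (by omega))
  obtain ⟨i, hi⟩ : S.Nonempty := Finset.card_pos.1 (by omega)
  obtain ⟨j, hj⟩ : Sᶜ.Nonempty := Finset.card_pos.1 (by omega)
  have := hG.connected.nonempty
  obtain ⟨v, -, hv⟩ := Finset.univ.exists_max_image f Finset.univ_nonempty
  obtain ⟨t, ht, rfl⟩ := (ha.1 i).2.1 v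
  exact (hlt t ht i hi j (Finset.mem_compl.1 hj)).not_ge (hv _ (Finset.mem_univ _))

end Levelling

/-! ### Upper bounds from corridors -/

section Corridor

open scoped Finset

variable {V : Type*} {G : SimpleGraph V} {x y b v : V} {p : G.Walk x y}

/-- The path `p` is a corridor in direction `b`: it runs inside the branch at `x` towards `b`, which
contains nothing else up to the distance of the end of `p`. -/
structure IsCorridor (G : SimpleGraph V) {x y : V} (p : G.Walk x y) (b : V) : Prop where
  isPath : p.IsPath
  adj : G.Adj x b
  mem_branch : ∀ v ∈ p.support, v ≠ x → v ∈ branch G x b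
  mem_support : ∀ v ∈ branch G x b, G.dist x v ≤ p.length → v ∈ p.support

lemma exists_isCorridor_of_isPath (hG : G.IsTree) (hp : p.IsPath) (hxb : G.Adj x b)
    (hsupp : ∀ v ∈ branch G x p.snd, G.dist x v ≤ p.length → v ∈ p.support) :
    ∃ b, IsCorridor G p b := by
  by_cases hnil : p.Nil
  · obtain rfl := hnil.eq
    obtain rfl := Walk.eq_nil_iff_nil.2 hnil
    refine ⟨b, hp, hxb, by simp, fun v hv hd ↦ ?_⟩
    obtain rfl := hG.connected.dist_eq_zero_iff.1 (Nat.le_zero.1 hd)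
    exact absurd hv notMem_branch
  · exact ⟨p.snd, hp, p.adj_snd hnil, fun v ↦ mem_branch_snd hG hp, hsupp⟩

open Classical in
/-- The levelling of a tree along a corridor of length `L` that starts at `x` in direction `b`: the
corridor occupies the levels `1, …, L + 1`. Outside of the branch of `b`, the truncated subtraction
puts `x` at level `1` and everything else at level `0`. -/
noncomputable def corridorLevel (G : SimpleGraph V) (x b : V) (L : ℕ) (v : V) : ℕ :=
  if v ∈ branch G x b then min (G.dist x v + 1) (L + 2) else 1 - G.dist x v

lemma corridorLevel_of_mem {L : ℕ} (hv : v ∈ branch G x b) :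
    corridorLevel G x b L v = min (G.dist x v + 1) (L + 2) := if_pos hv

lemma corridorLevel_of_notMem {L : ℕ} (hv : v ∉ branch G x b) :
    corridorLevel G x b L v = 1 - G.dist x v := if_neg hv

lemma corridorLevel_le_add_one (hG : G.IsTree) (hxb : G.Adj x b) (L : ℕ) {u v : V}
    (huv : G.Adj u v) : corridorLevel G x b L u ≤ corridorLevel G x b L v + 1 := by
  have hdist := hG.dist_eq_dist_add_one_of_adj x huv
  by_cases hu : u ∈ branch G x b
  · obtain rfl | hvx := eq_or_ne v x
    · rw [corridorLevel_of_mem hu, corridorLevel_of_notMem notMem_branch, dist_self,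
        dist_eq_one_iff_adj.2 huv.symm]
      omega
    · rw [corridorLevel_of_mem hu, corridorLevel_of_mem (mem_branch_of_adj hG hxb hu huv hvx)]
      omega
  · rw [corridorLevel_of_notMem hu]
    omega

lemma corridorLevel_le (v : V) (L : ℕ) : corridorLevel G x b L v ≤ L + 2 := by
  rw [corridorLevel]
  split_ifs <;> omega

lemma card_corridorLevel_eq_zero [Fintype V] (L : ℕ) (h : ∀ v, v ≠ x → v ∈ branch G x b) :
    #{v | corridorLevel G x b L v = 0} = 0 := by
  rw [Finset.card_eq_zero, Finset.filter_eq_empty_iff]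
  intro v _ hv
  obtain rfl | hvx := eq_or_ne v x
  · simp [corridorLevel_of_notMem notMem_branch] at hv
  · rw [corridorLevel_of_mem (h v hvx)] at hv
    omega

lemma card_corridorLevel_eq_zero_pos [Fintype V] [DecidableRel G.Adj] (hG : G.Connected)
    (hx : 2 ≤ G.degree x) (b : V) (L : ℕ) : 0 < #{v | corridorLevel G x b L v = 0} := by
  obtain ⟨d, hxd, hdb⟩ := exists_adj_of_two_le_degree hx b
  have hd : d ∉ branch G x b := fun hd ↦ hdb (eq_of_mem_branch_of_adj hG hd hxd)
  exact Finset.card_pos.2 ⟨d, by simp [corridorLevel_of_notMem hd, dist_eq_one_iff_adj.2 hxd]⟩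

namespace IsCorridor

lemma corridorLevel_eq (hG : G.IsTree) (hp : IsCorridor G p b) (hv : v ∈ p.support) :
    corridorLevel G x b p.length v = G.dist x v + 1 := by
  obtain rfl | hvx := eq_or_ne v x
  · simp [corridorLevel_of_notMem notMem_branch]
  · have := dist_add_dist_of_mem_support hG hp.isPath hv
    have := length_eq_dist_of_isPath hG hp.isPath
    rw [corridorLevel_of_mem (hp.mem_branch v hv hvx)]
    omega

lemma mem_support_of_corridorLevel (hG : G.Connected) (hp : IsCorridor G p b)
    (hpos : 1 ≤ corridorLevel G x b p.length v)
    (hle : corridorLevel G x b p.length v ≤ p.length + 1) : v ∈ p.support := by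
  by_cases hv : v ∈ branch G x b
  · rw [corridorLevel_of_mem hv] at hle
    exact hp.mem_support v hv (by omega)
  · rw [corridorLevel_of_notMem hv] at hpos
    obtain rfl := hG.dist_eq_zero_iff.1 (by omega : G.dist x v = 0)
    exact p.start_mem_support

lemma isLevelling (hG : G.IsTree) (hp : IsCorridor G p b) :
    IsLevelling G (corridorLevel G x b p.length) (p.length + 1) where
  le_add_one _ _ := corridorLevel_le_add_one hG hp.adj p.length
  le v := corridorLevel_le v p.length
  injOn u v huv hpos hle := by
    have hu := hp.mem_support_of_corridorLevel hG.connected hpos hle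
    have hv := hp.mem_support_of_corridorLevel hG.connected (huv ▸ hpos) (huv ▸ hle)
    rw [hp.corridorLevel_eq hG hu, hp.corridorLevel_eq hG hv] at huv
    obtain ⟨i, rfl, hi⟩ := Walk.mem_support_iff_exists_getVert.1 hu
    obtain ⟨j, rfl, hj⟩ := Walk.mem_support_iff_exists_getVert.1 hv
    rw [dist_getVert_of_isPath hG hp.isPath hi, dist_getVert_of_isPath hG hp.isPath hj] at huv
    rw [Nat.succ_injective huv]

variable [Fintype V]

lemma card_add_card_le (hG : G.IsTree) (hp : IsCorridor G p b) :
    #{v | corridorLevel G x b p.length v = 0} +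
      #{v | corridorLevel G x b p.length v = p.length + 2} +
      (p.length + 1) ≤ Fintype.card V := by
  classical
  have hsupp : p.support.toFinset.card = p.length + 1 := by
    rw [List.toFinset_card_of_nodup hp.isPath.support_nodup, Walk.length_support]
  rw [← hsupp, ← Finset.card_union_of_disjoint, ← Finset.card_union_of_disjoint]
  · exact Finset.card_le_univ _
  · rw [Finset.disjoint_left]
    intro v hv hvp
    rw [List.mem_toFinset] at hvp
    have hlevel := hp.corridorLevel_eq hG hvp
    have := dist_add_dist_of_mem_support hG hp.isPath hvp
    have := length_eq_dist_of_isPath hG hp.isPath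
    simp only [Finset.mem_union, Finset.mem_filter, Finset.mem_univ, true_and] at hv
    omega
  · exact Finset.disjoint_filter.2 fun v _ h₀ h₁ ↦ by omega

lemma lt_of_feasibleAgency (hG : G.IsTree) (hp : IsCorridor G p b) {k T : ℕ}
    {a : Fin k → ℕ → V} (ha : FeasibleAgency G k T a) :
    k < max 1 #{v | corridorLevel G x b p.length v = 0} +
      max 1 #{v | corridorLevel G x b p.length v = p.length + 2} :=
  ha.lt_of_isLevelling hG (hp.isLevelling hG) p.length.succ_pos

variable [DecidableRel G.Adj]

lemma card_corridorLevel_eq_top_pos (hG : G.IsTree) (hp : IsCorridor G p b)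
    (hy : 2 ≤ G.degree y) :
    0 < #{v | corridorLevel G x b p.length v = p.length + 2} := by
  have hlen := length_eq_dist_of_isPath hG hp.isPath
  obtain ⟨z, hz, hdist⟩ : ∃ z ∈ branch G x b, G.dist x z = G.dist x y + 1 := by
    obtain rfl | hyx := eq_or_ne y x
    · exact ⟨b, mem_branch_self hp.adj, by simp [dist_eq_one_iff_adj.2 hp.adj]⟩
    · have := card_children_add_one hG hyx
      obtain ⟨z, hz⟩ := Finset.card_pos.1 (by omega : 0 < (children G x y).card)
      obtain ⟨hyz, hdist⟩ := mem_children.1 hz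
      refine ⟨z, mem_branch_of_dist_eq hG hp.adj ?_ hyz hdist, hdist⟩
      exact hp.mem_branch y p.end_mem_support hyx
  refine Finset.card_pos.2 ⟨z, ?_⟩
  rw [Finset.mem_filter, corridorLevel_of_mem hz]
  exact ⟨Finset.mem_univ z, by omega⟩

end IsCorridor

end Corridor

section UpperBound

variable {V : Type*} {G : SimpleGraph V} {x y : V} {p : G.Walk x y} {k T : ℕ}
  {a : Fin k → ℕ → V}

lemma FeasibleAgency.le_one_of_hamiltonian (hG : G.IsTree) [Finite V] [Nontrivial V]
    (ha : FeasibleAgency G k T a) (hp : p.IsPath) (hsupp : ∀ w, w ∈ p.support) : k ≤ 1 := by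
  have := Fintype.ofFinite V
  obtain ⟨b, hxb⟩ := hG.connected.preconnected.exists_adj_of_nontrivial x
  obtain ⟨b, hb⟩ := exists_isCorridor_of_isPath hG hp hxb fun v _ _ ↦ hsupp v
  have := hb.lt_of_feasibleAgency hG ha
  have := hb.card_add_card_le hG
  have hcard : Fintype.card V = p.length + 1 := by
    classical
    rw [← Walk.length_support, ← List.toFinset_card_of_nodup hp.support_nodup,
      Finset.eq_univ_of_forall fun w ↦ List.mem_toFinset.2 (hsupp w), Finset.card_univ]
  omega

variable [Fintype V] [DecidableRel G.Adj]

lemma IsBare.exists_isCorridor (hG : G.IsTree) (hp : IsBare G p) (hx : 0 < G.degree x) :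
    ∃ b, IsCorridor G p b := by
  obtain ⟨b, hxb⟩ := (G.degree_pos_iff_exists_adj x).1 hx
  exact exists_isCorridor_of_isPath hG hp.isPath hxb fun v ↦ hp.mem_support_of_mem_branch hG

namespace FeasibleAgency

lemma add_length_add_two_le_of_isYYPath (hG : G.IsTree) (ha : FeasibleAgency G k T a)
    (hp : IsYYPath G p) :
    k + p.length + 2 ≤ Fintype.card V := by
  have hx : 3 ≤ G.degree x := hp.2.1
  have hy : 3 ≤ G.degree y := hp.2.2.1
  obtain ⟨b, hb⟩ := hp.isBare.exists_isCorridor hG (by omega)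
  have := hb.lt_of_feasibleAgency hG ha
  have := hb.card_add_card_le hG
  have := card_corridorLevel_eq_zero_pos hG.connected (by omega : 2 ≤ G.degree x) b p.length
  have := hb.card_corridorLevel_eq_top_pos hG (by omega)
  omega

lemma add_length_add_one_le_of_isLYPath (hG : G.IsTree) (ha : FeasibleAgency G k T a)
    (hp : IsLYPath G p) :
    k + p.length + 1 ≤ Fintype.card V := by
  have hx : G.degree x = 1 := hp.2.1
  have hy : 3 ≤ G.degree y := hp.2.2.1
  obtain ⟨b, hb⟩ := hp.isBare.exists_isCorridor hG (by omega)
  have := hb.lt_of_feasibleAgency hG ha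
  have := hb.card_add_card_le hG
  have := card_corridorLevel_eq_zero p.length fun v ↦
    mem_branch_of_degree_eq_one hG hx hb.adj
  have := hb.card_corridorLevel_eq_top_pos hG (by omega)
  omega

end FeasibleAgency

end UpperBound

/-! ### Moving agents one at a time -/

section Moves

variable {V ι : Type*} {G H : SimpleGraph V} {c c' : ι ↪ V} {i j : ι} {u w x y z : V}

/-- The configurations of agents on a graph, adjacent when they differ by moving a single agent
along an edge. The target of a move is vacant because configurations are injective. -/
def configGraph (G : SimpleGraph V) (ι : Type*) : SimpleGraph (ι ↪ V) where
  Adj c c' := ∃ i, G.Adj (c i) (c' i) ∧ ∀ j ≠ i, c' j = c j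
  symm := ⟨fun _ _ ⟨i, hi, hj⟩ ↦ ⟨i, hi.symm, fun j hji ↦ (hj j hji).symm⟩⟩
  loopless := ⟨fun _ ⟨_, hi, _⟩ ↦ hi.ne rfl⟩

namespace configGraph

lemma mono (hHG : H ≤ G) : configGraph H ι ≤ configGraph G ι :=
  fun _ _ ⟨i, hi, hj⟩ ↦ ⟨i, hHG hi, hj⟩

lemma apply_eq_of_reachable (h : (configGraph H ι).Reachable c c') (hj : c j ∉ H.support) :
    c' j = c j := by
  obtain ⟨p⟩ := h
  induction p with
  | nil => rfl
  | @cons c d c' hcd _ ih =>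
    obtain ⟨i, hi, hd⟩ := hcd
    have hdj : d j = c j := hd j <| by
      rintro rfl
      exact hj ⟨_, hi⟩
    rw [ih (hdj ▸ hj), hdj]

lemma mem_range_of_reachable (h : (configGraph H ι).Reachable c c') (hx : x ∉ H.support)
    (hc : x ∈ Set.range c) : x ∈ Set.range c' := by
  obtain ⟨j, rfl⟩ := hc
  exact ⟨j, apply_eq_of_reachable h hx⟩

lemma exists_adj (hadj : H.Adj (c i) y) (hy : y ∉ Set.range c) :
    ∃ c', (configGraph H ι).Adj c c' ∧ c' i = y ∧ ∀ j ≠ i, c' j = c j := by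
  classical
  have hc' : ∀ j ≠ i, c.setValue i y j = c j := fun j hj ↦
    c.setValue_eq_of_ne hj fun h ↦ hy ⟨j, h⟩
  exact ⟨c.setValue i y, ⟨i, by rwa [c.setValue_eq], hc'⟩, c.setValue_eq i y, hc'⟩

lemma exists_reachable_of_walk (p : H.Walk x y) (hi : c i = x)
    (hp : ∀ j ≠ i, c j ∉ p.support) :
    ∃ c', (configGraph H ι).Reachable c c' ∧ c' i = y ∧ ∀ j ≠ i, c' j = c j := by
  induction p generalizing c with
  | nil => exact ⟨c, .rfl, hi, fun _ _ ↦ rfl⟩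
  | @cons x z y hxz p ih =>
    obtain rfl := hi
    have hz : z ∉ Set.range c := by
      rintro ⟨j, rfl⟩
      exact hp j (ne_of_apply_ne c hxz.ne') (by simp)
    obtain ⟨d, hcd, hdi, hd⟩ := exists_adj hxz hz
    obtain ⟨c', hdc', hc'i, hc'⟩ := ih hdi fun j hj ↦ by
      rw [hd j hj]
      exact fun h ↦ hp j hj (by simp [h])
    exact ⟨c', hcd.reachable.trans hdc', hc'i, fun j hj ↦ (hc' j hj).trans (hd j hj)⟩

lemma exists_reachable_range_of_adj (hadj : H.Adj x y) (hx : x ∈ Set.range c)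
    (hy : y ∉ Set.range c) : ∃ c', (configGraph H ι).Reachable c c' ∧
      Set.range c' = insert y (Set.range c \ {x}) := by
  obtain ⟨i, rfl⟩ := hx
  obtain ⟨c', hcc', hi, hj⟩ := exists_adj hadj hy
  refine ⟨c', hcc'.reachable, Set.ext fun v ↦ ⟨?_, ?_⟩⟩
  · rintro ⟨j, rfl⟩
    obtain rfl | hji := eq_or_ne j i
    · exact .inl hi
    · exact .inr (hj j hji ▸ ⟨⟨j, rfl⟩, fun h ↦ hji (c.injective h)⟩)
  · rintro (rfl | ⟨⟨j, rfl⟩, hji⟩)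
    · exact ⟨i, hi⟩
    · exact ⟨j, hj j (ne_of_apply_ne c hji)⟩

/-- The agents between `x` and the vacant vertex `y` all shift by one step, so that `x` becomes
vacant instead of `y`. -/
lemma exists_reachable_range (hxy : H.Reachable x y) (hx : x ∈ Set.range c)
    (hy : y ∉ Set.range c) : ∃ c', (configGraph H ι).Reachable c c' ∧
      Set.range c' = insert y (Set.range c \ {x}) := by
  obtain ⟨p⟩ := hxy
  induction p generalizing c with
  | nil => exact absurd hx hy
  | @cons x z y hxz p ih =>
    by_cases hz : z ∈ Set.range c
    · obtain ⟨d, hcd, hd⟩ := ih hz hy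
      obtain ⟨c', hdc', hc'⟩ := exists_reachable_range_of_adj (c := d) hxz
        (by grind [hxz.ne]) (by grind)
      exact ⟨c', hcd.trans hdc', by grind [hxz.ne]⟩
    · obtain ⟨d, hcd, hd⟩ := exists_reachable_range_of_adj hxz hx hz
      obtain rfl | hzy := eq_or_ne z y
      · exact ⟨d, hcd, hd⟩
      · obtain ⟨c', hdc', hc'⟩ := ih (c := d) (by grind) (by grind)
        exact ⟨c', hcd.trans hdc', by grind⟩

lemma exists_reachable_disjoint_range (Z W : Finset V) (hcard : Z.card ≤ W.card)
    (hZW : ∀ z ∈ Z, ∀ w ∈ W, H.Reachable z w) (hW : ∀ w ∈ W, w ∉ Set.range c) :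
    ∃ c', (configGraph H ι).Reachable c c' ∧ ∀ z ∈ Z, z ∉ Set.range c' := by
  classical
  induction hn : (Z \ W).card generalizing W c with
  | zero =>
    rw [Finset.card_eq_zero, Finset.sdiff_eq_empty_iff_subset] at hn
    exact ⟨c, .rfl, fun z hz ↦ hW z (hn hz)⟩
  | succ n ih =>
    obtain ⟨z, hz⟩ := Finset.card_pos.1 (by omega : 0 < (Z \ W).card)
    obtain ⟨w, hw⟩ := Finset.card_pos.1 <|
      (Finset.card_pos.2 ⟨z, hz⟩).trans_le (Finset.card_sdiff_le_card_sdiff_iff.2 hcard)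
    rw [Finset.mem_sdiff] at hz hw
    obtain ⟨d, hcd, hd⟩ : ∃ d, (configGraph H ι).Reachable c d ∧
        ∀ v ∈ insert z (W.erase w), v ∉ Set.range d := by
      by_cases hzc : z ∈ Set.range c
      · obtain ⟨d, hcd, hd⟩ := exists_reachable_range (hZW z hz.1 w hw.1) hzc (hW w hw.1)
        exact ⟨d, hcd, by grind⟩
      · exact ⟨c, .rfl, by grind⟩
    obtain ⟨c', hdc', hc'⟩ := ih (insert z (W.erase w))
      (by rwa [Finset.card_insert_of_notMem (by grind), Finset.card_erase_add_one hw.1])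
      (fun x hx v hv ↦ by
        obtain rfl | hv := Finset.mem_insert.1 hv
        · exact (hZW x hx w hw.1).trans (hZW v hz.1 w hw.1).symm
        · exact hZW x hx v (Finset.mem_of_mem_erase hv)) hd
      (by
        have : Z \ insert z (W.erase w) = (Z \ W).erase z := by grind
        rw [this, Finset.card_erase_of_mem (by grind), hn, Nat.add_sub_cancel])
    exact ⟨c', hcd.trans hdc', hc'⟩

/-- The agent at `w` parks at `b₁`, the agent at the neighbour `u` of `w` follows and parks at `b₂`,
and then the first agent returns to `w` and moves on to `u`. -/
lemma exists_reachable_of_swap {a b₁ b₂ : V} (q : G.Walk w a) (hi : c i = w) (hj : c j = u)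
    (hwu : G.Adj w u) (hb₁ : G.Adj a b₁) (hb₂ : G.Adj a b₂) (hb : b₁ ≠ b₂)
    (hb₁q : b₁ ∉ q.support) (hb₂q : b₂ ∉ q.support) (hq : ∀ l ≠ i, c l ∉ q.support)
    (hcb₁ : b₁ ∉ Set.range c) (hcb₂ : b₂ ∉ Set.range c) :
    ∃ c', (configGraph G ι).Reachable c c' ∧ c' i = u := by
  simp only [Set.mem_range, not_exists] at hcb₁ hcb₂
  have hji : j ≠ i := ne_of_apply_ne c (by rw [hi, hj]; exact hwu.ne')
  obtain ⟨c₁, hc₁, hc₁i, hc₁_ne⟩ := exists_reachable_of_walk (q.concat hb₁) hi fun l hl ↦ by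
    simp [Walk.support_concat, hq l hl, hcb₁ l]
  obtain ⟨c₂, hc₂, hc₂j, hc₂_ne⟩ := exists_reachable_of_walk (c := c₁) (i := j)
    (.cons hwu.symm (q.concat hb₂)) (by rw [hc₁_ne j hji, hj]) fun l hl ↦ by
      obtain rfl | hli := eq_or_ne l i
      · simp [Walk.support_concat, hc₁i, hb, hb₁q, ← hj, Ne.symm (hcb₁ j)]
      · simp [Walk.support_concat, hc₁_ne l hli, ← hj, hl, hq l hli, hcb₂ l]
  obtain ⟨c₃, hc₃, hc₃i, -⟩ := exists_reachable_of_walk (c := c₂) (i := i)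
    (.cons hb₁.symm (q.reverse.concat hwu)) (by rw [hc₂_ne i hji.symm, hc₁i]) fun l hl ↦ by
      obtain rfl | hlj := eq_or_ne l j
      · simp [Walk.support_concat, hc₂j, hb.symm, hb₂q, ← hj, Ne.symm (hcb₂ l)]
      · simp [Walk.support_concat, hc₂_ne l hlj, hc₁_ne l hl, ← hj, hlj, hq l hl, hcb₁ l]
  exact ⟨c₃, (hc₁.trans hc₂).trans hc₃, hc₃i⟩

end configGraph

end Moves

/-! ### Nearby joints -/

section StretchBounded

variable {V : Type*} [Fintype V] {G : SimpleGraph V} [DecidableRel G.Adj] {k : ℕ}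
  {a w x y z : V} {q : G.Walk w y}

/-- The two inequalities that the Y–Y-paths and the L–Y-paths impose on the number `k` of agents. -/
structure StretchBounded (G : SimpleGraph V) [DecidableRel G.Adj] (k : ℕ) : Prop where
  yy : ∀ {x y} (p : G.Walk x y), IsYYPath G p → k + p.length + 2 ≤ Fintype.card V
  ly : ∀ {x y} (p : G.Walk x y), IsLYPath G p → k + p.length + 1 ≤ Fintype.card V

lemma IsBare.exists_cons (hG : G.IsTree) (hq : IsBare G q) (hw : G.degree w = 2)
    (hnil : ¬ q.Nil) : ∃ (w' : V) (h : G.Adj w' w), IsBare G (.cons h q) := by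
  obtain ⟨w', hww', hne⟩ := exists_adj_of_two_le_degree hw.ge q.snd
  refine ⟨w', hww'.symm, hq.isPath.cons fun hmem ↦ ?_, fun z hz hzw' hzy ↦ ?_⟩
  · exact hne (hG.isAcyclic.eq_snd_of_adj_start hq.isPath hww' hmem)
  · obtain rfl | hzw := eq_or_ne z w
    · exact hw
    · exact hq.degree_eq_two z (by simpa [hzw'] using hz) hzw hzy

namespace StretchBounded

/-- The bare path extends backwards until it starts at a leaf or at a joint. -/
lemma add_length_add_one_le (hG : G.IsTree) (hk : StretchBounded G k) (hy : 3 ≤ G.degree y)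
    {w : V} {q : G.Walk w y} (hq : IsBare G q) : k + q.length + 1 ≤ Fintype.card V := by
  by_cases hw : 3 ≤ G.degree w
  · have := hk.yy q ⟨hq.isPath, hw, hy, hq.degree_eq_two⟩
    omega
  have hnil : ¬ q.Nil := fun hnil ↦ hw (hnil.eq ▸ hy)
  have hw₀ : 0 < G.degree w := (G.degree_pos_iff_exists_adj w).2 ⟨_, q.adj_snd hnil⟩
  by_cases hw₁ : G.degree w = 1
  · exact hk.ly q ⟨hq.isPath, hw₁, hy, hq.degree_eq_two⟩
  obtain ⟨w', h, hq'⟩ := hq.exists_cons hG (by omega) hnil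
  have := hq.isPath.length_lt
  have := hk.add_length_add_one_le hG hy hq'
  rw [Walk.length_cons] at this
  omega
termination_by Fintype.card V - q.length

lemma add_length_add_two_le (hG : G.IsTree) (hk : StretchBounded G k) (hy : 3 ≤ G.degree y)
    (hq : IsBare G q) (hw : 2 ≤ G.degree w) : k + q.length + 2 ≤ Fintype.card V := by
  by_cases hw₃ : 3 ≤ G.degree w
  · exact hk.yy q ⟨hq.isPath, hw₃, hy, hq.degree_eq_two⟩
  · obtain ⟨w', h, hq'⟩ := hq.exists_cons hG (by omega) fun hnil ↦ hw₃ (hnil.eq ▸ hy)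
    exact hk.add_length_add_one_le hG hy hq'

lemma add_two_le (hk : StretchBounded G k) (hy : 3 ≤ G.degree y) :
    k + 2 ≤ Fintype.card V := by
  simpa using hk.yy (.nil : G.Walk y y) ⟨.nil, hy, hy, by simp⟩

end StretchBounded

lemma isBare_of_forall_dist_le (hG : G.IsTree) {p : G.Walk x y} (hp : p.IsPath)
    (hmin : ∀ v ∈ p.support, v ≠ x → 3 ≤ G.degree v → G.dist x y ≤ G.dist x v) : IsBare G p := by
  refine isBare_of_degree_le_two hG hp fun v hv hvx hvy ↦ ?_
  by_contra! hdeg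
  have := hmin v hv hvx hdeg
  have := dist_add_dist_of_mem_support hG hp hv
  exact hvy (hG.connected.dist_eq_zero_iff.1 (by omega))

/-- The closest joint lies behind `w`, so the path from `z` to it is bare. -/
lemma StretchBounded.add_dist_add_one_le (hG : G.IsTree) (hk : StretchBounded G k)
    (hwa : G.Adj w a) (hbranch : ∀ v ∈ branch G w a, G.degree v ≤ 2) (hx : 3 ≤ G.degree x)
    (hz : z ∈ branch G w a) : k + G.dist w z + 1 ≤ Fintype.card V := by
  have notMem {v} (hv : 3 ≤ G.degree v) : v ∉ branch G w a := fun h ↦ by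
    have := hbranch v h
    omega
  obtain ⟨y, hy, hmin⟩ := Set.exists_min_image {v | 3 ≤ G.degree v} (G.dist w)
    (Set.toFinite _) ⟨x, hx⟩
  obtain ⟨q, hq, hlen⟩ := hG.connected.exists_path_of_dist z y
  have hzy := dist_eq_of_mem_branch hG hwa hz (notMem hy)
  have hbare : IsBare G q := isBare_of_forall_dist_le hG hq fun v _ _ hv ↦ by
    rw [hzy, dist_eq_of_mem_branch hG hwa hz (notMem hv)]
    exact Nat.add_le_add_left (hmin v hv) _
  have := hk.add_length_add_one_le hG hy hbare
  rw [SimpleGraph.dist_comm (v := w)] at hzy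
  omega

lemma ncard_branch_le (hG : G.IsTree) (hwa : G.Adj w a)
    (hbranch : ∀ v ∈ branch G w a, G.degree v ≤ 2) :
    ∃ z ∈ branch G w a, (branch G w a).ncard ≤ G.dist w z := by
  classical
  obtain ⟨z, hz, hmax⟩ := Set.exists_max_image (branch G w a) (G.dist w)
    (Set.toFinite _) ⟨a, mem_branch_self hwa⟩
  obtain ⟨p, hp, hlen⟩ := hG.connected.exists_path_of_dist w z
  have hbare : IsBare G p := isBare_of_degree_le_two hG hp fun v hv hvw _ ↦
    hbranch v (mem_branch_of_isPath hG hwa hz hp hv hvw)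
  have hsub : branch G w a ⊆ p.support.toFinset.erase w := fun v hv ↦ by
    have hvw : v ≠ w := ne_of_mem_of_not_mem hv notMem_branch
    have hv' : v ∈ branch G w p.snd := by rwa [snd_eq_of_mem_branch hG hwa hz hp]
    simpa [hvw] using hbare.mem_support_of_mem_branch hG hv' (hlen ▸ hmax v hv)
  refine ⟨z, hz, (Set.ncard_le_ncard hsub).trans ?_⟩
  rw [Set.ncard_coe_finset, card_support_erase hp, hlen]

/-- If no joint lies in a branch, then the branch is a path, which is too short. -/
lemma StretchBounded.exists_joint_mem_branch (hG : G.IsTree) (hk : StretchBounded G k)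
    (hwa : G.Adj w a) (hcard : Fintype.card V ≤ (branch G w a).ncard + k)
    (hx : 3 ≤ G.degree x) : ∃ y ∈ branch G w a, 3 ≤ G.degree y := by
  by_contra! hno
  have hno : ∀ v ∈ branch G w a, G.degree v ≤ 2 := fun v hv ↦ by
    have := hno v hv
    omega
  obtain ⟨z, hz, hle⟩ := ncard_branch_le hG hwa hno
  have := hk.add_dist_add_one_le hG hwa hno hx hz
  omega

lemma StretchBounded.exists_path_to_joint (hG : G.IsTree) (hk : StretchBounded G k)
    (hw : 2 ≤ G.degree w) (hwa : G.Adj w a) (hcard : Fintype.card V ≤ (branch G w a).ncard + k)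
    (hx : 3 ≤ G.degree x) : ∃ y ∈ branch G w a, 3 ≤ G.degree y ∧
      ∃ p : G.Walk w y, p.IsPath ∧ k + p.length + 2 ≤ Fintype.card V := by
  obtain ⟨y, ⟨hy, hy₃⟩, hmin⟩ := Set.exists_min_image {v ∈ branch G w a | 3 ≤ G.degree v}
    (G.dist w) (Set.toFinite _) (hk.exists_joint_mem_branch hG hwa hcard hx)
  obtain ⟨p, hp, -⟩ := hG.connected.exists_path_of_dist w y
  have hbare : IsBare G p := isBare_of_forall_dist_le hG hp fun v hv hvw hv₃ ↦
    hmin v ⟨mem_branch_of_isPath hG hwa hy hp hv hvw, hv₃⟩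
  exact ⟨y, hy, hy₃, p, hp, hk.add_length_add_two_le hG hy₃ hbare hw⟩

end StretchBounded

/-! ### Exchanging two agents -/

section LocalStep

variable {V ι : Type*} {G : SimpleGraph V} {c : ι ↪ V} {i j : ι} {a a' u v v' w x y : V}

namespace configGraph

lemma exists_reachable_vacant_of_branch [Finite V] (hG : G.IsTree) (hwa : G.Adj w a) (Z : Finset V)
    (hZ : ∀ z ∈ Z, z ∈ branch G w a) (hcard : Z.card ≤ (branch G w a \ Set.range c).ncard) :
    ∃ c', (configGraph G ι).Reachable c c' ∧ (∀ z ∈ Z, z ∉ Set.range c') ∧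
      (∀ l, c l ∉ branch G w a → c' l = c l) ∧
      ∀ v, v ∉ branch G w a → v ∉ Set.range c → v ∉ Set.range c' := by
  let W := (branch G w a \ Set.range c).toFinite.toFinset
  have hW : ∀ v ∈ W, v ∈ branch G w a ∧ v ∉ Set.range c := by simp [W]
  rw [Set.ncard_eq_toFinset_card _] at hcard
  obtain ⟨c', hcc', hc'⟩ := exists_reachable_disjoint_range (c := c) Z W hcard
    (fun z hz v hv ↦ reachable_spanningCoe_induce_branch hG hwa (hZ z hz) (hW v hv).1)
    (fun v hv ↦ (hW v hv).2)
  have hsupp : (G.induce (branch G w a)).spanningCoe.support ⊆ branch G w a :=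
    (support_spanningCoe _).trans_subset (Subtype.coe_image_subset _ _)
  refine ⟨c', hcc'.mono (mono (G.spanningCoe_induce_le _)), hc', fun l hl ↦ ?_, fun v hv hvc ↦ ?_⟩
  · exact apply_eq_of_reachable hcc' fun h ↦ hl (hsupp h)
  · exact mt (mem_range_of_reachable hcc'.symm fun h ↦ hv (hsupp h)) hvc

lemma exists_reachable_notMem_range [Finite V] (hG : G.IsTree) (hwa : G.Adj w a)
    (hv : v ∈ branch G w a) (hvc : v ∉ Set.range c) :
    ∃ c', (configGraph G ι).Reachable c c' ∧ a ∉ Set.range c' ∧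
      (∀ l, c l ∉ branch G w a → c' l = c l) ∧
      ∀ v, v ∉ branch G w a → v ∉ Set.range c → v ∉ Set.range c' := by
  obtain ⟨c', hcc', ha, hc'⟩ := exists_reachable_vacant_of_branch (c := c) hG hwa {a}
    (by simpa using mem_branch_self hwa)
    ((Set.ncard_pos (Set.toFinite _)).2 ⟨v, hv, hvc⟩)
  exact ⟨c', hcc', ha a (by simp), hc'⟩

lemma exists_reachable_of_vacant_ahead [Finite V] (hG : G.IsTree) (hi : c i = w)
    (hwu : G.Adj w u) (hv : v ∈ branch G w u) (hvc : v ∉ Set.range c) :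
    ∃ c', (configGraph G ι).Reachable c c' ∧ c' i = u := by
  obtain ⟨d, hcd, hu, hd, -⟩ := exists_reachable_notMem_range hG hwu hv hvc
  have hdi : d i = w := (hd i (hi ▸ notMem_branch)).trans hi
  obtain ⟨c', hdc', hc'i, -⟩ := exists_adj (hdi ▸ hwu) hu
  exact ⟨c', hcd.trans hdc'.reachable, hc'i⟩

lemma exists_reachable_of_vacant_of_vacant [Finite V] (hG : G.IsTree) (hi : c i = w)
    (hj : c j = u) (hwu : G.Adj w u) (hwa : G.Adj w a) (hwa' : G.Adj w a') (haa' : a ≠ a')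
    (hau : a ≠ u) (hau' : a' ≠ u) (hv : v ∈ branch G w a) (hvc : v ∉ Set.range c)
    (hv' : v' ∈ branch G w a') (hvc' : v' ∉ Set.range c) :
    ∃ c', (configGraph G ι).Reachable c c' ∧ c' i = u := by
  have notMem {x b} (hx : G.Adj w x) (hb : G.Adj w b) (hbx : b ≠ x) : x ∉ branch G w b :=
    fun h ↦ hbx (branch_unique hG hb hx h (mem_branch_self hx))
  have hv'a : v' ∉ branch G w a := fun h ↦ haa' (branch_unique hG hwa hwa' h hv')
  obtain ⟨d, hcd, had, hd, hdc⟩ := exists_reachable_notMem_range hG hwa hv hvc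
  obtain ⟨e, hde, hae, he, hed⟩ := exists_reachable_notMem_range hG hwa' hv' (hdc v' hv'a hvc')
  have fixed {l x} (hl : c l = x) (hxa : x ∉ branch G w a) (hxa' : x ∉ branch G w a') :
      e l = x := by
    have hdl : d l = x := (hd l (hl ▸ hxa)).trans hl
    exact (he l (hdl ▸ hxa')).trans hdl
  have hei := fixed hi notMem_branch notMem_branch
  obtain ⟨c', hec', hc'⟩ := exists_reachable_of_swap .nil hei
    (fixed hj (notMem hwu hwa hau) (notMem hwu hwa' hau')) hwu hwa hwa' haa'
    (by simpa using hwa.ne') (by simpa using hwa'.ne')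
    (fun l hl ↦ by simpa [← hei] using hl) (hed a (notMem hwa hwa' haa'.symm) had) hae
  exact ⟨c', (hcd.trans hde).trans hec', hc'⟩

variable [Fintype V] [DecidableRel G.Adj] [Fintype ι]

lemma ncard_compl_range (c : ι ↪ V) :
    (Set.range c)ᶜ.ncard + Fintype.card ι = Fintype.card V := by
  have := Set.ncard_add_ncard_compl (Set.range c)
  rw [Set.ncard_range_of_injective c.injective, Nat.card_eq_fintype_card,
    Nat.card_eq_fintype_card] at this
  omega

lemma exists_reachable_of_vacant_subset_branch (hG : G.IsTree)
    (hk : StretchBounded G (Fintype.card ι)) (hi : c i = w) (hj : c j = u) (hwu : G.Adj w u)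
    (hwa : G.Adj w a) (hau : a ≠ u) (hvac : (Set.range c)ᶜ ⊆ branch G w a)
    (hx : 3 ≤ G.degree x) : ∃ c', (configGraph G ι).Reachable c c' ∧ c' i = u := by
  classical
  have hw : 2 ≤ G.degree w := by
    rw [← card_neighborFinset_eq_degree]
    exact Finset.one_lt_card.2 ⟨a, by simpa, u, by simpa, hau⟩
  have hcard := ncard_compl_range c
  have := Set.ncard_le_ncard hvac
  obtain ⟨y, hy, hy₃, p, hp, hlen⟩ := hk.exists_path_to_joint hG hw hwa (by omega) hx
  have := degree_le_card_children_add_one (r := w) (v := y) hG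
  obtain ⟨b₁, hb₁, b₂, hb₂, hb⟩ := Finset.one_lt_card.1 (by omega : 1 < (children G w y).card)
  have mem_branch {b} (hb : b ∈ children G w y) : b ∈ branch G w a :=
    mem_branch_of_dist_eq hG hwa hy (mem_children.1 hb).1 (mem_children.1 hb).2
  have notMem_support {b} (hb : b ∈ children G w y) : b ∉ p.support := fun h ↦ by
    have := dist_add_dist_of_mem_support hG hp h
    have := (mem_children.1 hb).2
    omega
  have hu : u ∉ branch G w a := fun h ↦ hau (branch_unique hG hwa hwu h (mem_branch_self hwu))
  obtain ⟨d, hcd, hZ, hd, -⟩ := exists_reachable_vacant_of_branch (c := c) hG hwa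
    (p.support.toFinset.erase w ∪ {b₁, b₂}) (fun z hz ↦ by
      simp only [Finset.mem_union, Finset.mem_erase, List.mem_toFinset, Finset.mem_insert,
        Finset.mem_singleton] at hz
      obtain ⟨hzw, hz⟩ | rfl | rfl := hz
      exacts [mem_branch_of_isPath hG hwa hy hp hz hzw, mem_branch hb₁, mem_branch hb₂]) (by
      rw [Set.sdiff_eq, Set.inter_eq_self_of_subset_right hvac]
      refine (Finset.card_union_le _ _).trans ?_
      rw [card_support_erase hp, Finset.card_pair hb]
      omega)
  have hdi : d i = w := (hd i (hi ▸ notMem_branch)).trans hi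
  obtain ⟨c', hdc', hc'⟩ := exists_reachable_of_swap p hdi ((hd j (hj ▸ hu)).trans hj) hwu
    (mem_children.1 hb₁).1 (mem_children.1 hb₂).1 hb (notMem_support hb₁) (notMem_support hb₂)
    (fun l hl hlp ↦ hZ (d l) (by simp [hlp, ← hdi, hl]) ⟨l, rfl⟩)
    (hZ b₁ (by simp)) (hZ b₂ (by simp))
  exact ⟨c', hcd.trans hdc', hc'⟩

lemma exists_reachable_of_adj (hG : G.IsTree) (hk : StretchBounded G (Fintype.card ι))
    (hx : 3 ≤ G.degree x) (hu : G.Adj (c i) u) :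
    ∃ c', (configGraph G ι).Reachable c c' ∧ c' i = u := by
  by_cases hbranch : ∃ v ∈ branch G (c i) u, v ∉ Set.range c
  · obtain ⟨v, hv, hvc⟩ := hbranch
    exact exists_reachable_of_vacant_ahead hG rfl hu hv hvc
  push Not at hbranch
  obtain ⟨j, hj⟩ := hbranch u (mem_branch_self hu)
  have exists_branch {v} (hv : v ∉ Set.range c) : ∃ a, G.Adj (c i) a ∧ a ≠ u ∧
      v ∈ branch G (c i) a := by
    obtain ⟨a, ha, hva⟩ := exists_mem_branch hG.connected
      (ne_of_mem_of_not_mem (Set.mem_range_self i) hv).symm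
    refine ⟨a, ha, ?_, hva⟩
    rintro rfl
    exact hv (hbranch v hva)
  obtain ⟨v, hv⟩ : (Set.range c)ᶜ.Nonempty := by
    have := ncard_compl_range c
    have := hk.add_two_le hx
    exact Set.nonempty_of_ncard_ne_zero (by omega)
  obtain ⟨a, ha, hau, hva⟩ := exists_branch hv
  by_cases hvac : (Set.range c)ᶜ ⊆ branch G (c i) a
  · exact exists_reachable_of_vacant_subset_branch hG hk rfl hj hu ha hau hvac hx
  · obtain ⟨v', hv', hv'a⟩ := Set.not_subset.1 hvac
    obtain ⟨a', ha', ha'u, hva'⟩ := exists_branch hv'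
    have haa' : a ≠ a' := by
      rintro rfl
      exact hv'a hva'
    exact exists_reachable_of_vacant_of_vacant hG rfl hj hu ha ha' haa' hau ha'u hva hv hva' hv'

lemma exists_reachable_apply_eq (hG : G.IsTree) (hk : StretchBounded G (Fintype.card ι))
    (hx : 3 ≤ G.degree x) (c : ι ↪ V) (i : ι) (y : V) :
    ∃ c', (configGraph G ι).Reachable c c' ∧ c' i = y := by
  obtain ⟨p⟩ := hG.connected (c i) y
  generalize hi : c i = w at p
  induction p generalizing c with
  | nil => exact ⟨c, .rfl, hi⟩
  | cons hwu _ ih =>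
    obtain ⟨d, hcd, hd⟩ := exists_reachable_of_adj hG hk hx (hi ▸ hwu)
    obtain ⟨c', hdc', hc'⟩ := ih d hd
    exact ⟨c', hcd.trans hdc', hc'⟩

end configGraph

end LocalStep

/-! ### From reachability to agencies -/

section Agency

variable {V : Type*} {G : SimpleGraph V}

lemma exists_closed_walk_of_reachable {α : Type*} {H : SimpleGraph α} {x : α} (s : Finset α)
    (hs : ∀ y ∈ s, H.Reachable x y) : ∃ p : H.Walk x x, ∀ y ∈ s, y ∈ p.support := by
  classical
  induction s using Finset.induction_on with
  | empty => exact ⟨.nil, by simp⟩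
  | insert y s _ ih =>
    obtain ⟨p, hp⟩ := ih fun z hz ↦ hs z (Finset.mem_insert_of_mem hz)
    obtain ⟨q⟩ := hs y (Finset.mem_insert_self y s)
    refine ⟨p.append (q.append q.reverse), fun z hz ↦ ?_⟩
    simp only [Walk.mem_support_append_iff]
    obtain rfl | hz := Finset.mem_insert.1 hz
    · exact .inr (.inl q.end_mem_support)
    · exact .inl (hp z hz)

lemma feasibleAgency_of_closed_walk {k : ℕ} {c : Fin k ↪ V} (p : (configGraph G (Fin k)).Walk c c)
    (hp : ∀ i v, ∃ d ∈ p.support, d i = v) :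
    FeasibleAgency G k p.length fun i t ↦ p.getVert t i := by
  have move {t : ℕ} (ht : t < p.length) := p.adj_getVert_succ ht
  refine ⟨fun i ↦ ⟨fun t ht ↦ ?_, fun v ↦ ?_, by simp⟩, fun i j hij ↦ ⟨fun t _ ↦ ?_, fun t ht ↦ ?_⟩⟩
  · obtain ⟨l, hl, hne⟩ := move ht
    obtain rfl | hil := eq_or_ne i l
    · exact .inr hl
    · exact .inl (hne i hil).symm
  · obtain ⟨d, hd, rfl⟩ := hp i v
    obtain ⟨t, rfl, ht⟩ := Walk.mem_support_iff_exists_getVert.1 hd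
    exact ⟨t, ht, rfl⟩
  · exact (p.getVert t).injective.ne hij
  · rintro ⟨hi, hj, hne⟩
    obtain ⟨l, -, hl⟩ := move ht
    obtain rfl | hil := eq_or_ne i l
    · exact hne ((hi.trans (hl j hij.symm)).trans hj.symm)
    · exact hne (hl i hil).symm

lemma exists_feasibleAgency [Fintype V] {k : ℕ} (hk : k ≤ Fintype.card V)
    (h : ∀ (c : Fin k ↪ V) i v, ∃ c', (configGraph G (Fin k)).Reachable c c' ∧ c' i = v) :
    ∃ (T : ℕ) (a : Fin k → ℕ → V), FeasibleAgency G k T a := by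
  classical
  obtain ⟨c⟩ : Nonempty (Fin k ↪ V) := Function.Embedding.nonempty_of_card_le (by simpa)
  choose d hcd hd using h c
  obtain ⟨p, hp⟩ := exists_closed_walk_of_reachable
    (Finset.univ.image fun q : Fin k × V ↦ d q.1 q.2) (by simpa using fun _ i v h ↦ h ▸ hcd i v)
  exact ⟨_, _, feasibleAgency_of_closed_walk p fun i v ↦
    ⟨d i v, hp _ (Finset.mem_image_of_mem _ (Finset.mem_univ (i, v))), hd i v⟩⟩

lemma exists_feasibleAgency_of_le_one [Finite V] {k : ℕ} (hG : G.Connected) (hk : k ≤ 1) :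
    ∃ (T : ℕ) (a : Fin k → ℕ → V), FeasibleAgency G k T a := by
  have := Fintype.ofFinite V
  have := hG.nonempty
  have := Fin.subsingleton_iff_le_one.2 hk
  refine exists_feasibleAgency (hk.trans Fintype.card_pos) fun c i v ↦ ?_
  obtain ⟨p⟩ := hG (c i) v
  obtain ⟨c', hcc', hc', -⟩ := configGraph.exists_reachable_of_walk p rfl fun j hj ↦
    absurd (Subsingleton.elim j i) hj
  exact ⟨c', hcc', hc'⟩

lemma exists_feasibleAgency_of_stretchBounded [Fintype V] [DecidableRel G.Adj] {k : ℕ}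
    (hk : StretchBounded G k) (hG : G.IsTree) {x : V} (hx : 3 ≤ G.degree x) :
    ∃ (T : ℕ) (a : Fin k → ℕ → V), FeasibleAgency G k T a :=
  exists_feasibleAgency ((Nat.le_add_right k 2).trans (hk.add_two_le hx)) <|
    configGraph.exists_reachable_apply_eq hG (by simpa using hk) hx

end Agency

/-- for a tree `G` on `n ≥ 2` vertices, the maximum number of
agents of a feasible agency equals the minimum of the quantities
`n - stretch_YY(G) - 1`, `n - stretch_LY(G)`, `n - stretch_LL(G) + 1`, taken
over those whose defining stretch exists.  Since each stretch is a maximum of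
the number of vertices `p.length + 1` over the corresponding paths, this minimum
is the infimum of the corresponding per-path quantities over all Y–Y-paths,
L–Y-paths, and Hamiltonian paths. -/
theorem stmt15 {V : Type*} [Fintype V] (G : SimpleGraph V) [DecidableRel G.Adj]
    (hG : G.IsTree) (hn : 2 ≤ Fintype.card V) :
    IsGreatest {k : ℕ | ∃ T : ℕ, ∃ a : Fin k → ℕ → V, FeasibleAgency G k T a}
      (sInf {m : ℕ |
        (∃ (x y : V) (p : G.Walk x y), IsYYPath G p ∧
            m = Fintype.card V - (p.length + 1) - 1) ∨
        (∃ (x y : V) (p : G.Walk x y), IsLYPath G p ∧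
            m = Fintype.card V - (p.length + 1)) ∨
        ((∃ (x y : V) (p : G.Walk x y), p.IsPath ∧ (∀ w : V, w ∈ p.support)) ∧
            m = Fintype.card V - Fintype.card V + 1)}) := by
  have : Nontrivial V := Fintype.one_lt_card_iff_nontrivial.1 hn
  refine ⟨?_, fun k ⟨T, a, ha⟩ ↦ le_csInf ?_ ?_⟩
  · generalize hk : @sInf ℕ _ _ = k
    obtain hk_le | hk_lt := le_or_gt k 1
    · exact exists_feasibleAgency_of_le_one hG.connected hk_le
    obtain ⟨x, hx⟩ | hpath := exists_joint_or_hamiltonian_path hG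
    · refine exists_feasibleAgency_of_stretchBounded ⟨fun p hp ↦ ?_, fun p hp ↦ ?_⟩ hG hx
      · have := hk.ge.trans <| Nat.sInf_le (.inl ⟨_, _, p, hp, rfl⟩)
        omega
      · have := hk.ge.trans <| Nat.sInf_le (.inr (.inl ⟨_, _, p, hp, rfl⟩))
        omega
    · have := hk.ge.trans <| Nat.sInf_le (.inr (.inr ⟨hpath, rfl⟩))
      omega
  · obtain ⟨x, hx⟩ | hpath := exists_joint_or_hamiltonian_path hG
    · exact ⟨_, .inl ⟨x, x, .nil, ⟨.nil, hx, hx, by simp⟩, rfl⟩⟩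
    · exact ⟨_, .inr (.inr ⟨hpath, rfl⟩)⟩
  · rintro m (⟨x, y, p, hp, rfl⟩ | ⟨x, y, p, hp, rfl⟩ | ⟨⟨x, y, p, hp, hsupp⟩, rfl⟩)
    · have := ha.add_length_add_two_le_of_isYYPath hG hp
      omega
    · have := ha.add_length_add_one_le_of_isLYPath hG hp
      omega
    · exact (ha.le_one_of_hamiltonian hG hp hsupp).trans (Nat.le_add_left 1 _)
end

section
/- Let G be a tree on n ≥ 2 vertices and let a(0),…,a(T) be a tour in G. Then for every vertex v of G there are at least deg(v) distinct time units t ∈ {0,…,T−1} with a(t) = v, where deg(v) is the degree of v in G. -/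
open SimpleGraph

/-!
Deleting a bridge `vw` splits off the set `S` of vertices still joined to `w`, and `v ∉ S`. A
closed walk visiting both `v` and `w` must at some time enter `S`, and the only step entering `S`
is the one from `v` to `w`. Hence such a walk is at `v` at least once for every bridge `vw` it
uses, each time with a different next vertex. In a tree every edge is a bridge.
-/

theorem exists_notMem_and_add_one_mem {α : Type*} {a : ℕ → α} {T : ℕ} (hclosed : a 0 = a T)
    {S : Set α} {s u : ℕ} (hsT : s ≤ T) (huT : u ≤ T) (hs : a s ∉ S) (hu : a u ∈ S) :
    ∃ t < T, a t ∉ S ∧ a (t + 1) ∈ S := by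
  by_contra! hno
  have mem_anti : AntitoneOn (fun t ↦ a t ∈ S) (Set.Iic T) :=
    antitoneOn_of_add_one_le Set.ordConnected_Iic fun t _ _ htT hmem ↦
      by_contra fun hnot ↦ hno t (Nat.lt_of_succ_le htT) hnot hmem
  have h0 : a 0 ∈ S := mem_anti (Nat.zero_le T) huT (Nat.zero_le u) hu
  have hT : a T ∈ S := hclosed ▸ h0
  exact hs (mem_anti hsT Set.self_mem_Iic hsT hT)

theorem eq_and_eq_of_adj_of_reachable_deleteEdges {V : Type*} {G : SimpleGraph V} {v w x y : V}
    (hadj : G.Adj x y) (hx : ¬ (G.deleteEdges {s(v, w)}).Reachable x w)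
    (hy : (G.deleteEdges {s(v, w)}).Reachable y w) : x = v ∧ y = w := by
  have hedge : s(x, y) = s(v, w) := by
    by_contra hne
    exact hx ((deleteEdges_adj.2 ⟨hadj, hne⟩).reachable.trans hy)
  obtain h | ⟨rfl, -⟩ := Sym2.eq_iff.1 hedge
  · exact h
  · exact absurd (Reachable.refl x) hx

/-- A walk with parking of time horizon `T`, not necessarily closed or covering. As for
`AgencyTour`, only the values `a 0, …, a T` are constrained. -/
def IsParkingWalk {V : Type*} (G : SimpleGraph V) (T : ℕ) (a : ℕ → V) : Prop :=
  ∀ t < T, a t = a (t + 1) ∨ G.Adj (a t) (a (t + 1))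

theorem IsParkingWalk.exists_traverse_of_isBridge {V : Type*} {G : SimpleGraph V} {T : ℕ}
    {a : ℕ → V} (hwalk : IsParkingWalk G T a) (hclosed : a 0 = a T) {v w : V}
    (hbridge : G.IsBridge s(v, w)) (hv : ∃ t ≤ T, a t = v) (hw : ∃ t ≤ T, a t = w) :
    ∃ t < T, a t = v ∧ a (t + 1) = w := by
  obtain ⟨s, hsT, rfl⟩ := hv
  obtain ⟨u, huT, rfl⟩ := hw
  obtain ⟨t, htT, hout, hin⟩ := exists_notMem_and_add_one_mem hclosed
    (S := {x | (G.deleteEdges {s(a s, a u)}).Reachable x (a u)}) hsT huT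
    (isBridge_iff.1 hbridge) .rfl
  have hadj : G.Adj (a t) (a (t + 1)) :=
    (hwalk t htT).resolve_left fun hpark ↦ hout (hpark ▸ hin)
  exact ⟨t, htT, eq_and_eq_of_adj_of_reachable_deleteEdges hadj hout hin⟩

theorem stmt16_general {V : Type*} [DecidableEq V] {G : SimpleGraph V} {T : ℕ} {a : ℕ → V}
    (hwalk : IsParkingWalk G T a) (hclosed : a 0 = a T) {v : V} (hv : ∃ t ≤ T, a t = v)
    {N : Finset V} (hbridge : ∀ w ∈ N, G.IsBridge s(v, w)) (hvisit : ∀ w ∈ N, ∃ t ≤ T, a t = w) :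
    N.card ≤ ((Finset.range T).filter fun t ↦ a t = v).card := by
  refine Finset.card_le_card_of_surjOn (fun t ↦ a (t + 1)) fun w hw ↦ ?_
  obtain ⟨t, htT, htv, htw⟩ :=
    hwalk.exists_traverse_of_isBridge hclosed (hbridge w hw) hv (hvisit w hw)
  exact ⟨t, by simp [htT, htv], htw⟩

/-- in a tree on `n ≥ 2` vertices, any tour `a` with time horizon
`T` visits every vertex `v` at least `deg v` times among the time units
`0, …, T - 1`. -/
theorem stmt16 {V : Type*} [Fintype V] [DecidableEq V] (G : SimpleGraph V)
    [DecidableRel G.Adj] (hG : G.IsTree) (hn : 2 ≤ Fintype.card V)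
    (T : ℕ) (a : ℕ → V) (ha : AgencyTour G T a) (v : V) :
    G.degree v ≤ ((Finset.range T).filter fun t => a t = v).card := by
  have hbridge (w) (hw : w ∈ G.neighborFinset v) : G.IsBridge s(v, w) :=
    isAcyclic_iff_forall_adj_isBridge.1 hG.isAcyclic ((G.mem_neighborFinset v w).1 hw)
  exact stmt16_general ha.1 ha.2.2 (ha.2.1 v) hbridge fun w _ ↦ ha.2.1 w
end

section
/- Let G be a tree on n ≥ 2 vertices. Then every feasible agency in G with k agents and time horizon T satisfies T ≥ k · deg(v) for every vertex v of G; in particular T ≥ k · Δ(G), where Δ(G) is the maximum degree of G. -/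
open SimpleGraph

/-!
An edge `wv` of a tree is a bridge, so a closed walk visiting both endpoints must cross it from `w`
to `v` at some step. For a fixed vertex `v`, every agent thus steps into `v` from each of its
neighbours. These arrivals at `v` occur at distinct times: a single agent arrives from only one
vertex at a time, and two agents arriving simultaneously would crash in the node `v`. Hence there
are at least `k * deg v` time steps.
-/

lemma exists_lt_and_not_succ_of_closed {p : ℕ → Prop} {T s t : ℕ} (hclosed : p T → p 0)
    (hs : s ≤ T) (ht : t ≤ T) (hps : p s) (hpt : ¬ p t) : ∃ r < T, p r ∧ ¬ p (r + 1) := by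
  by_contra! hstep
  have propagate {m n : ℕ} (hmn : m ≤ n) (hn : n ≤ T) (hm : p m) : p n := by
    induction n, hmn using Nat.le_induction with
    | base => exact hm
    | succ n _ ih => exact hstep n hn (ih (Nat.le_of_succ_le hn))
  exact hpt (propagate (Nat.zero_le t) ht (hclosed (propagate hs le_rfl hps)))

section Bridges

variable {V : Type*} {G : SimpleGraph V} {v w : V}

lemma eq_and_eq_of_isBridge_of_adj {x y : V} (hwv : G.IsBridge s(w, v)) (hxy : G.Adj x y)
    (hx : (G.deleteEdges {s(w, v)}).Reachable w x)
    (hy : ¬ (G.deleteEdges {s(w, v)}).Reachable w y) : x = w ∧ y = v := by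
  have hedge : s(x, y) = s(w, v) := by
    by_contra hne
    exact hy (hx.trans (deleteEdges_adj.mpr ⟨hxy, hne⟩).reachable)
  rcases Sym2.eq_iff.mp hedge with hforward | ⟨rfl, -⟩
  · exact hforward
  · exact absurd hx (isBridge_iff.mp hwv)

lemma AgencyTour.exists_crossing_of_isBridge {T : ℕ} {a : ℕ → V} (ha : AgencyTour G T a)
    (hwv : G.IsBridge s(w, v)) : ∃ t < T, a t = w ∧ a (t + 1) = v := by
  obtain ⟨hstep, hvisit, hclosed⟩ := ha
  obtain ⟨s, hs, rfl⟩ := hvisit w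
  obtain ⟨t, ht, rfl⟩ := hvisit v
  let H := G.deleteEdges {s(a s, a t)}
  obtain ⟨r, hr, hin, hout⟩ : ∃ r < T, H.Reachable (a s) (a r) ∧ ¬ H.Reachable (a s) (a (r + 1)) :=
    exists_lt_and_not_succ_of_closed (p := fun r => H.Reachable (a s) (a r))
      (by simp only [hclosed, imp_self]) hs ht (Reachable.refl (a s)) (isBridge_iff.mp hwv)
  have hadj : G.Adj (a r) (a (r + 1)) :=
    (hstep r hr).resolve_left fun hparked => hout (hparked ▸ hin)
  exact ⟨r, hr, eq_and_eq_of_isBridge_of_adj hwv hadj hin hout⟩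

end Bridges

lemma FeasibleAgency.injective_at {V : Type*} {G : SimpleGraph V} {k T : ℕ} {a : Fin k → ℕ → V}
    (h : FeasibleAgency G k T a) {t : ℕ} (ht : t ≤ T) : Function.Injective fun i => a i t := by
  intro i j hij
  by_contra hne
  exact (h.2 i j hne).1 t ht hij

lemma mul_maxDegree_le_of_forall_mul_degree_le {V : Type*} [Fintype V] {G : SimpleGraph V}
    [DecidableRel G.Adj] {m n : ℕ} (h : ∀ v, m * G.degree v ≤ n) : m * G.maxDegree ≤ n := by
  cases isEmpty_or_nonempty V with
  | inl _ => simp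
  | inr _ =>
    obtain ⟨v, hv⟩ := G.exists_maximal_degree_vertex
    exact hv ▸ h v

theorem stmt17_general {ι V : Type*} [Fintype ι] {G : SimpleGraph V} {T : ℕ} {a : ι → ℕ → V}
    (htour : ∀ i, AgencyTour G T (a i))
    (hnode : ∀ t ≤ T, Function.Injective fun i => a i t)
    {v : V} {s : Finset V} (hs : ∀ w ∈ s, G.IsBridge s(w, v)) :
    Fintype.card ι * s.card ≤ T := by
  choose departure hdeparture_lt hfrom hto using fun p : ι × s =>
    (htour p.1).exists_crossing_of_isBridge (hs p.2 p.2.2)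
  have hdeparture_inj : Function.Injective departure := by
    intro p q hpq
    have hagent : p.1 = q.1 := hnode (departure p + 1) (hdeparture_lt p) <|
      (hto p).trans (hpq ▸ (hto q).symm)
    have hvertex : (p.2 : V) = q.2 := by rw [← hfrom p, ← hfrom q, hagent, hpq]
    exact Prod.ext hagent (Subtype.ext hvertex)
  have hcard : Fintype.card (ι × s) ≤ Fintype.card (Fin T) :=
    Fintype.card_le_of_injective (fun p => ⟨departure p, hdeparture_lt p⟩) fun _ _ hpq =>
      hdeparture_inj (Fin.mk.inj hpq)
  simpa only [Fintype.card_prod, Fintype.card_coe, Fintype.card_fin] using hcard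

/-- in a tree on `n ≥ 2` vertices, every feasible agency with `k`
agents and time horizon `T` satisfies `T ≥ k * deg v` for every vertex `v`; in
particular `T ≥ k * Δ(G)` for the maximum degree `Δ(G)`. -/
theorem stmt17 {V : Type*} [Fintype V] (G : SimpleGraph V) [DecidableRel G.Adj]
    (hG : G.IsTree) (hn : 2 ≤ Fintype.card V)
    (k T : ℕ) (a : Fin k → ℕ → V) (h : FeasibleAgency G k T a) :
    (∀ v : V, k * G.degree v ≤ T) ∧ k * G.maxDegree ≤ T := by
  have hdegree (v : V) : k * G.degree v ≤ T := by
    have hbridge (w) (hw : w ∈ G.neighborFinset v) : G.IsBridge s(w, v) :=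
      isAcyclic_iff_forall_adj_isBridge.mp hG.isAcyclic ((G.mem_neighborFinset v w).mp hw).symm
    simpa using stmt17_general h.1 (fun _ => h.injective_at) hbridge
  exact ⟨hdegree, mul_maxDegree_le_of_forall_mul_degree_le hdegree⟩
end
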